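/- arXiv:1908.05272 — 4 statements merged into one kernel-verified Lean document; each statement's English description precedes it below -/
import Mathlib

section
/- Suppose there exist nonempty finite nested grids S_1 ⊆ S_2 ⊆ ⋯ ⊆ T such that almost surely the realized p-value function p_ω satisfies (G1w) and (G2w); that almost surely p_ω satisfies (a1)–(a3); that the process (p(·,t))_{t∈T} is PRDS on U; that P(p(·,t) ≤ x) ≤ x for every t ∈ U and x ∈ [0,1]; and that ω ↦ Q(ω) is measurable. Then the functional Benjamini–Hochberg procedure at level α controls the functional false discovery rate: E[Q] ≤ α·ν(U)/ν(T) ≤ α. -/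
open Filter Set MeasureTheory
open scoped Classical

theorem br_sum {Ω : Type*} [MeasurableSpace Ω] (P : Measure Ω) [IsProbabilityMeasure P]
    (X ρ : Ω → ℝ) (hX : Measurable X) (hρ : Measurable ρ) (β : ℝ) (hβ : 0 ≤ β)
    (hmono : ∀ m u v : ℝ, u ≤ v → P.real {ω | X ω ≤ u ∧ ρ ω ≤ m} * P.real {ω | X ω ≤ v}
      ≤ P.real {ω | X ω ≤ v ∧ ρ ω ≤ m} * P.real {ω | X ω ≤ u})
    (L : Finset ℝ) : (∀ c ∈ L, 0 < c ∧ P.real {ω | X ω ≤ β * c} ≤ β * c) →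
      ∀ M : ℝ, (∀ c ∈ L, c < M) →
      ∑ c ∈ L, (1 / c) * P.real {ω | X ω ≤ β * c ∧ ρ ω = c}
        ≤ β * (P.real {ω | X ω ≤ β * M ∧ ρ ω < M} / P.real {ω | X ω ≤ β * M}) := by
  induction L using Finset.induction_on_max with
  | empty =>
    intro _ M _
    simp only [Finset.sum_empty]
    positivity
  | insert m s hms ih =>
    intro hL M hM
    have hm0 := (hL m (Finset.mem_insert_self _ _)).1
    have hmsup := (hL m (Finset.mem_insert_self _ _)).2
    have hmM := hM m (Finset.mem_insert_self _ _)
    have hnot : m ∉ s := fun h => lt_irrefl _ (hms m h)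
    rw [Finset.sum_insert hnot]
    have ih' := ih (fun c hc => hL c (Finset.mem_insert_of_mem hc)) m hms
    have hpos : 0 ≤ β * (P.real {ω | X ω ≤ β * M ∧ ρ ω < M} / P.real {ω | X ω ≤ β * M}) := by
      positivity
    by_cases h0 : P.real {ω | X ω ≤ β * m} = 0
    · have h1 : P.real {ω | X ω ≤ β * m ∧ ρ ω = m} = 0 := by
        apply le_antisymm _ measureReal_nonneg
        rw [← h0]
        exact measureReal_mono (fun ω h => h.1)
      rw [h0] at ih'
      rw [h1]
      simp only [div_zero, mul_zero, zero_add] at ih' ⊢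
      linarith
    · have hp : 0 < P.real {ω | X ω ≤ β * m} := lt_of_le_of_ne measureReal_nonneg (Ne.symm h0)
      have hle : β * m ≤ β * M := by gcongr
      have hpM : 0 < P.real {ω | X ω ≤ β * M} :=
        lt_of_lt_of_le hp (measureReal_mono (fun ω (h : X ω ≤ β * m) => h.trans hle))
      have hsplit : P.real {ω | X ω ≤ β * m ∧ ρ ω ≤ m} = P.real {ω | X ω ≤ β * m ∧ ρ ω < m}
          + P.real {ω | X ω ≤ β * m ∧ ρ ω = m} := by
        rw [← measureReal_union]
        · congr 1
          ext ω
          simp only [mem_ofPred_eq, mem_union, ← and_or_left, le_iff_lt_or_eq]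
        · rw [Set.disjoint_left]
          rintro ω h1 h2
          exact absurd h2.2 (ne_of_lt h1.2)
        · exact (measurableSet_le hX measurable_const).inter
            (measurableSet_eq_fun hρ measurable_const)
      have h2 : 1 / m ≤ β / P.real {ω | X ω ≤ β * m} := by
        rw [div_le_div_iff₀ hm0 hp]; linarith
      have h3 := hmono m _ _ hle
      have h4 : P.real {ω | X ω ≤ β * M ∧ ρ ω ≤ m} ≤ P.real {ω | X ω ≤ β * M ∧ ρ ω < M} :=
        measureReal_mono (fun ω h => ⟨h.1, lt_of_le_of_lt h.2 hmM⟩)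
      have h5 : P.real {ω | X ω ≤ β * m ∧ ρ ω ≤ m} / P.real {ω | X ω ≤ β * m} ≤
          P.real {ω | X ω ≤ β * M ∧ ρ ω ≤ m} / P.real {ω | X ω ≤ β * M} := by
        rw [div_le_div_iff₀ hp hpM]; exact h3
      calc _ ≤ β / P.real {ω | X ω ≤ β * m} * P.real {ω | X ω ≤ β * m ∧ ρ ω = m}
            + β * (P.real {ω | X ω ≤ β * m ∧ ρ ω < m} / P.real {ω | X ω ≤ β * m}) := by
              gcongr
        _ = β * (P.real {ω | X ω ≤ β * m ∧ ρ ω ≤ m} / P.real {ω | X ω ≤ β * m}) := by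
              rw [hsplit]; ring
        _ ≤ β * (P.real {ω | X ω ≤ β * M ∧ ρ ω ≤ m} / P.real {ω | X ω ≤ β * M}) := by gcongr
        _ ≤ _ := by gcongr

/-- conditional monotonicity from the regression-type dependence -/
theorem prds_mono {Ω : Type*} [m0 : MeasurableSpace Ω] (P : Measure Ω) [IsProbabilityMeasure P]
    (X : Ω → ℝ) (hX : Measurable X) (hX01 : ∀ ω, X ω ∈ Icc (0:ℝ) 1)
    (E : Set Ω) (hE : MeasurableSet E) (g : ℝ → ℝ) (hg : MonotoneOn g (Icc 0 1))
    (hgE : (fun ω => g (X ω)) =ᵐ[P] P[E.indicator (fun _ => (1:ℝ)) |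
      MeasurableSpace.comap X (inferInstance : MeasurableSpace ℝ)]) (u v : ℝ) (huv : u ≤ v) :
    P.real ({ω | X ω ≤ u} ∩ E) * P.real {ω | X ω ≤ v}
      ≤ P.real ({ω | X ω ≤ v} ∩ E) * P.real {ω | X ω ≤ u} := by
  have hm : MeasurableSpace.comap X (inferInstance : MeasurableSpace ℝ) ≤ m0 := hX.comap_le
  have hint : Integrable (E.indicator (fun _ => (1:ℝ))) P := (integrable_const 1).indicator hE
  have key : ∀ B : Set ℝ, MeasurableSet B → ∫ ω in X ⁻¹' B, g (X ω) ∂P = P.real (X ⁻¹' B ∩ E) := by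
    intro B hB
    rw [setIntegral_congr_ae (hX hB) (hgE.mono fun ω h _ => h),
      setIntegral_condExp hm hint ⟨B, hB, rfl⟩, setIntegral_indicator hE, setIntegral_const]
    simp
  have hgint : Integrable (fun ω => g (X ω)) P := integrable_condExp.congr hgE.symm
  have e1 : {ω | X ω ≤ v} = X ⁻¹' Iic u ∪ X ⁻¹' Ioc u v := by
    rw [← preimage_union, Iic_union_Ioc_eq_Iic huv]; rfl
  have e0 : {ω | X ω ≤ u} = X ⁻¹' Iic u := rfl
  have hdis : Disjoint (X ⁻¹' Iic u) (X ⁻¹' Ioc u v) :=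
    (Set.Iic_disjoint_Ioc le_rfl).preimage X
  have hA := hX (measurableSet_Iic (a := u))
  have hB := hX (measurableSet_Ioc (a := u) (b := v))
  have r1 : P.real {ω | X ω ≤ v} = P.real (X ⁻¹' Iic u) + P.real (X ⁻¹' Ioc u v) := by
    rw [e1, measureReal_union hdis hB]
  have r2 : P.real ({ω | X ω ≤ v} ∩ E) = P.real (X ⁻¹' Iic u ∩ E) + P.real (X ⁻¹' Ioc u v ∩ E) := by
    rw [e1, union_inter_distrib_right, measureReal_union
      (hdis.mono inter_subset_left inter_subset_left) (hB.inter hE)]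
  rw [r1, r2, e0]
  suffices h : P.real (X ⁻¹' Iic u ∩ E) * P.real (X ⁻¹' Ioc u v)
      ≤ P.real (X ⁻¹' Ioc u v ∩ E) * P.real (X ⁻¹' Iic u) by nlinarith
  rcases lt_or_ge u 0 with hu0 | hu0
  · have : X ⁻¹' Iic u = ∅ := by
      ext ω
      simp only [mem_preimage, mem_Iic, mem_empty_iff_false, iff_false, not_le]
      exact lt_of_lt_of_le hu0 (hX01 ω).1
    simp [this]
  rcases lt_or_ge 1 u with hu1 | hu1
  · have : X ⁻¹' Ioc u v = ∅ := by
      ext ω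
      simp only [mem_preimage, mem_Ioc, mem_empty_iff_false, iff_false, not_and]
      intro h
      linarith [(hX01 ω).2]
    simp [this]
  rw [← key _ measurableSet_Iic, ← key _ measurableSet_Ioc]
  have h1 : ∫ ω in X ⁻¹' Iic u, g (X ω) ∂P ≤ g u * P.real (X ⁻¹' Iic u) := by
    have := setIntegral_mono_on (g := fun _ => g u) hgint.integrableOn
      (integrable_const _).integrableOn hA
      (fun ω h => hg (hX01 ω) ⟨hu0, hu1⟩ h)
    simpa [mul_comm] using this
  have h2 : g u * P.real (X ⁻¹' Ioc u v) ≤ ∫ ω in X ⁻¹' Ioc u v, g (X ω) ∂P :=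
    setIntegral_ge_of_const_le_real hB (measure_ne_top _ _)
      (fun ω h => hg ⟨hu0, hu1⟩ (hX01 ω) (le_of_lt h.1)) hgint.integrableOn
  calc _ ≤ g u * P.real (X ⁻¹' Iic u) * P.real (X ⁻¹' Ioc u v) := by gcongr
    _ = g u * P.real (X ⁻¹' Ioc u v) * P.real (X ⁻¹' Iic u) := by ring
    _ ≤ _ := by gcongr

/-- rejected weight of the weighted discrete procedure -/
noncomputable def bhRho {l : ℕ} (w : Fin l → ℝ) (β : ℝ) (x : Fin l → ℝ) : ℝ :=
  (Finset.univ : Finset (Finset (Fin l))).sup' ⟨∅, Finset.mem_univ _⟩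
    (fun A => if ∀ i ∈ A, x i ≤ β * ∑ i ∈ A, w i then ∑ i ∈ A, w i else 0)

theorem bhRho_le {l : ℕ} (w : Fin l → ℝ) (β : ℝ) (x : Fin l → ℝ) (A : Finset (Fin l))
    (hA : ∀ i ∈ A, x i ≤ β * ∑ i ∈ A, w i) : ∑ i ∈ A, w i ≤ bhRho w β x := by
  have := Finset.le_sup' (fun A => if ∀ i ∈ A, x i ≤ β * ∑ i ∈ A, w i then ∑ i ∈ A, w i else 0)
    (Finset.mem_univ A)
  simp only [if_pos hA] at this
  exact this

theorem bhRho_exists {l : ℕ} (w : Fin l → ℝ) (β : ℝ) (x : Fin l → ℝ) :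
    ∃ A : Finset (Fin l), (∀ i ∈ A, x i ≤ β * ∑ i ∈ A, w i) ∧ bhRho w β x = ∑ i ∈ A, w i := by
  obtain ⟨A, -, hA⟩ := Finset.exists_mem_eq_sup' (s := (Finset.univ : Finset (Finset (Fin l))))
    ⟨∅, Finset.mem_univ _⟩
    (fun A => if ∀ i ∈ A, x i ≤ β * ∑ i ∈ A, w i then ∑ i ∈ A, w i else 0)
  by_cases h : ∀ i ∈ A, x i ≤ β * ∑ i ∈ A, w i
  · refine ⟨A, h, ?_⟩
    rw [bhRho, hA, if_pos h]
  · refine ⟨∅, by simp, ?_⟩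
    rw [bhRho, hA, if_neg h]
    simp

theorem bhRho_nonneg {l : ℕ} (w : Fin l → ℝ) (β : ℝ) (x : Fin l → ℝ) : 0 ≤ bhRho w β x := by
  simpa using bhRho_le w β x ∅ (by simp)

theorem bhRho_anti {l : ℕ} (w : Fin l → ℝ) (β : ℝ) (x y : Fin l → ℝ) (h : x ≤ y) :
    bhRho w β y ≤ bhRho w β x := by
  obtain ⟨A, hA, e⟩ := bhRho_exists w β y
  rw [e]
  exact bhRho_le w β x A (fun i hi => (h i).trans (hA i hi))

theorem bhRho_sum {l : ℕ} (w : Fin l → ℝ) (hw : ∀ i, 0 ≤ w i) (β : ℝ) (hβ : 0 ≤ β)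
    (x : Fin l → ℝ) :
    ∑ i with x i ≤ β * bhRho w β x, w i = bhRho w β x := by
  obtain ⟨A, hA, e⟩ := bhRho_exists w β x
  have h1 : bhRho w β x ≤ ∑ i with x i ≤ β * bhRho w β x, w i := by
    conv_lhs => rw [e]
    apply Finset.sum_le_sum_of_subset_of_nonneg
    · intro i hi
      simp only [Finset.mem_filter, Finset.mem_univ, true_and]
      rw [e]; exact hA i hi
    · intro i _ _; exact hw i
  refine le_antisymm ?_ h1
  apply bhRho_le
  intro i hi
  simp only [Finset.mem_filter, Finset.mem_univ, true_and] at hi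
  exact hi.trans (by gcongr)

theorem bhRho_max {l : ℕ} (w : Fin l → ℝ) (β : ℝ) (hβ : 0 ≤ β)
    (x : Fin l → ℝ) (r : ℝ) (hr : r ≤ β * ∑ i with x i ≤ r, w i) : r ≤ β * bhRho w β x := by
  refine hr.trans ?_
  gcongr
  apply bhRho_le
  intro i hi
  simp only [Finset.mem_filter, Finset.mem_univ, true_and] at hi
  exact hi.trans hr

theorem bhRho_le_total {l : ℕ} (w : Fin l → ℝ) (hw : ∀ i, 0 ≤ w i) (β : ℝ) (x : Fin l → ℝ) :
    bhRho w β x ≤ ∑ i, w i := by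
  obtain ⟨A, hA, e⟩ := bhRho_exists w β x
  rw [e]
  exact Finset.sum_le_sum_of_subset_of_nonneg (Finset.subset_univ _) (fun i _ _ => hw i)

theorem bhRho_meas {l : ℕ} (w : Fin l → ℝ) (β : ℝ) : Measurable (bhRho w β) := by
  have : bhRho w β = (Finset.univ : Finset (Finset (Fin l))).sup' ⟨∅, Finset.mem_univ _⟩
    (fun A x => if ∀ i ∈ A, x i ≤ β * ∑ i ∈ A, w i then ∑ i ∈ A, w i else 0) := by
    ext x
    exact (Finset.sup'_apply (s := (Finset.univ : Finset (Finset (Fin l)))) ⟨∅, Finset.mem_univ _⟩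
      (fun A (x : Fin l → ℝ) =>
        if ∀ i ∈ A, x i ≤ β * ∑ i ∈ A, w i then ∑ i ∈ A, w i else 0) x).symm
  rw [this]
  apply Finset.measurable_sup'
  intro A _
  apply Measurable.ite _ measurable_const measurable_const
  have : {x : Fin l → ℝ | ∀ i ∈ A, x i ≤ β * ∑ i ∈ A, w i} =
      ⋂ i ∈ A, {x : Fin l → ℝ | x i ≤ β * ∑ i ∈ A, w i} := by
    ext x; simp
  rw [this]
  exact Finset.measurableSet_biInter A
    (fun i _ => measurableSet_le (measurable_pi_apply i) measurable_const)

/-- the false discovery proportion of the discrete procedure -/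
noncomputable def bhQ {l : ℕ} (w : Fin l → ℝ) (N : Fin l → Prop) (β : ℝ) (x : Fin l → ℝ) : ℝ :=
  (∑ i with N i ∧ x i ≤ β * bhRho w β x, w i) / bhRho w β x

theorem bhQ_nonneg {l : ℕ} (w : Fin l → ℝ) (hw : ∀ i, 0 ≤ w i) (N : Fin l → Prop) (β : ℝ)
    (x : Fin l → ℝ) : 0 ≤ bhQ w N β x :=
  div_nonneg (Finset.sum_nonneg fun i _ => hw i) (bhRho_nonneg _ _ _)

theorem bhQ_le_one {l : ℕ} (w : Fin l → ℝ) (hw : ∀ i, 0 ≤ w i) (N : Fin l → Prop) (β : ℝ)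
    (hβ : 0 ≤ β) (x : Fin l → ℝ) : bhQ w N β x ≤ 1 := by
  apply div_le_one_of_le₀ _ (bhRho_nonneg _ _ _)
  conv_rhs => rw [← bhRho_sum w hw β hβ x]
  apply Finset.sum_le_sum_of_subset_of_nonneg
  · intro i hi
    simp only [Finset.mem_filter, Finset.mem_univ, true_and] at hi ⊢
    exact hi.2
  · intro i _ _; exact hw i

theorem bhQ_eq {l : ℕ} (w : Fin l → ℝ) (N : Fin l → Prop) (β : ℝ) (x : Fin l → ℝ) :
    bhQ w N β x = ∑ i with N i, w i * (if x i ≤ β * bhRho w β x then 1 / bhRho w β x else 0) := by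
  rw [bhQ, Finset.sum_div, ← Finset.filter_filter, Finset.sum_filter]
  apply Finset.sum_congr rfl
  intro i _
  split_ifs <;> ring

theorem bhQ_term_meas {l : ℕ} (w : Fin l → ℝ) (β : ℝ) (i : Fin l) : Measurable
    (fun x : Fin l → ℝ => (if x i ≤ β * bhRho w β x then 1 / bhRho w β x else 0)) :=
  Measurable.ite (measurableSet_le (measurable_pi_apply i) ((bhRho_meas w β).const_mul β))
    (measurable_const.div (bhRho_meas w β)) measurable_const

theorem bhQ_meas {l : ℕ} (w : Fin l → ℝ) (N : Fin l → Prop) (β : ℝ) : Measurable (bhQ w N β) := by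
  rw [show bhQ w N β = _ from funext (bhQ_eq w N β)]
  exact Finset.measurable_sum _ (fun i _ => (bhQ_term_meas w β i).const_mul _)

theorem bhQ_term_eq {l : ℕ} (w : Fin l → ℝ) (β : ℝ) (i : Fin l) (x : Fin l → ℝ) :
    (if x i ≤ β * bhRho w β x then 1 / bhRho w β x else 0) =
    ∑ c ∈ ((Finset.univ : Finset (Finset (Fin l))).image (fun A => ∑ i ∈ A, w i)).filter (0 < ·),
      {y : Fin l → ℝ | y i ≤ β * c ∧ bhRho w β y = c}.indicator (fun _ => 1 / c) x := by
  rcases (bhRho_nonneg w β x).eq_or_lt with h0 | h0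
  · rw [Finset.sum_eq_zero]
    · rw [← h0]; simp
    · intro c hc
      rw [Finset.mem_filter] at hc
      rw [Set.indicator_of_notMem]
      rintro ⟨_, h⟩
      linarith [hc.2]
  · rw [Finset.sum_eq_single (bhRho w β x)]
    · simp only [Set.indicator_apply, mem_ofPred_eq, and_true]
    · intro c _ hne
      rw [Set.indicator_of_notMem]
      rintro ⟨_, h⟩
      exact hne h.symm
    · intro h
      exfalso
      apply h
      rw [Finset.mem_filter, Finset.mem_image]
      obtain ⟨A, _, e⟩ := bhRho_exists w β x
      exact ⟨⟨A, Finset.mem_univ _, e.symm⟩, h0⟩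

theorem discrete_fdr {l : ℕ} (w : Fin l → ℝ) (hw : ∀ i, 0 ≤ w i) (N : Fin l → Prop) (β : ℝ)
    (hβ : 0 ≤ β) (hβ1 : β * ∑ i, w i ≤ 1)
    {Ω : Type*} [MeasurableSpace Ω] (P : Measure Ω) [IsProbabilityMeasure P]
    (X : Ω → Fin l → ℝ) (hX : ∀ i, Measurable (fun ω => X ω i)) (hX01 : ∀ ω i, X ω i ∈ Icc (0:ℝ) 1)
    (hsup : ∀ i, N i → ∀ x ∈ Icc (0:ℝ) 1, P.real {ω | X ω i ≤ x} ≤ x)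
    (hprds : ∀ j : Fin l, N j → ∀ D : Set (Fin l → ℝ), MeasurableSet D →
      (∀ x y : Fin l → ℝ, x ∈ D → x ≤ y → y ∈ D) →
      ∃ g : ℝ → ℝ, MonotoneOn g (Set.Icc 0 1) ∧
        (fun ω => g (X ω j)) =ᵐ[P]
          P[(fun ω => D.indicator (fun _ => (1:ℝ)) (X ω)) |
            MeasurableSpace.comap (fun ω => X ω j) (inferInstance : MeasurableSpace ℝ)]) :
    ∫ ω, bhQ w N β (X ω) ∂P ≤ β * ∑ i with N i, w i := by
  have hXm : Measurable X := measurable_pi_iff.2 hX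
  have hρm : Measurable (fun ω => bhRho w β (X ω)) := (bhRho_meas w β).comp hXm
  set C := ((Finset.univ : Finset (Finset (Fin l))).image (fun A => ∑ i ∈ A, w i)).filter (0 < ·)
    with hC
  have hms : ∀ i c, MeasurableSet {ω | X ω i ≤ β * c ∧ bhRho w β (X ω) = c} := fun i c =>
    (measurableSet_le (hX i) measurable_const).inter (measurableSet_eq_fun hρm measurable_const)
  have hrew : ∀ ω i, (if X ω i ≤ β * bhRho w β (X ω) then 1 / bhRho w β (X ω) else 0) =
      ∑ c ∈ C, {ω | X ω i ≤ β * c ∧ bhRho w β (X ω) = c}.indicator (fun _ => 1 / c) ω := by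
    intro ω i
    rw [bhQ_term_eq]
    rfl
  have hi : ∀ i c, Integrable
      ({ω | X ω i ≤ β * c ∧ bhRho w β (X ω) = c}.indicator (fun _ => 1 / c)) P := fun i c =>
    (integrable_const _).indicator (hms i c)
  have hterm : ∀ i, N i →
      ∫ ω, (if X ω i ≤ β * bhRho w β (X ω) then 1 / bhRho w β (X ω) else 0) ∂P ≤ β := by
    intro i hNi
    simp_rw [hrew]
    rw [integral_finsetSum _ (fun c _ => hi i c)]
    simp_rw [fun c => integral_indicator_const (μ := P) (1 / c) (hms i c), smul_eq_mul]
    have hb := br_sum P (fun ω => X ω i) (fun ω => bhRho w β (X ω)) (hX i) hρm β hβ ?_ C ?_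
      ((∑ i, w i) + 1) ?_
    · simp_rw [mul_comm (P.real _)]
      refine hb.trans ?_
      apply mul_le_of_le_one_right hβ
      apply div_le_one_of_le₀ _ measureReal_nonneg
      exact measureReal_mono (fun ω h => h.1)
    · intro m u v huv
      have hD : MeasurableSet {x : Fin l → ℝ | bhRho w β x ≤ m} :=
        measurableSet_le (bhRho_meas w β) measurable_const
      obtain ⟨g, hg, hge⟩ := hprds i hNi {x | bhRho w β x ≤ m} hD
        (fun x y hx hxy => (bhRho_anti w β x y hxy).trans hx)
      exact prds_mono P (fun ω => X ω i) (hX i) (fun ω => hX01 ω i) {ω | bhRho w β (X ω) ≤ m}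
        (hXm hD) g hg hge u v huv
    · intro c hc
      rw [hC, Finset.mem_filter, Finset.mem_image] at hc
      obtain ⟨⟨A, -, rfl⟩, hc⟩ := hc
      refine ⟨hc, hsup i hNi _ ⟨by positivity, le_trans ?_ hβ1⟩⟩
      exact mul_le_mul_of_nonneg_left (Finset.sum_le_sum_of_subset_of_nonneg
        (Finset.subset_univ _) (fun i _ _ => hw i)) hβ
    · intro c hc
      rw [hC, Finset.mem_filter, Finset.mem_image] at hc
      obtain ⟨⟨A, -, rfl⟩, hc⟩ := hc
      exact lt_of_le_of_lt (Finset.sum_le_sum_of_subset_of_nonneg (Finset.subset_univ _)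
        (fun i _ _ => hw i)) (lt_add_one _)
  simp_rw [bhQ_eq]
  rw [integral_finsetSum]
  · rw [Finset.mul_sum]
    apply Finset.sum_le_sum
    intro i hN
    rw [Finset.mem_filter] at hN
    rw [integral_const_mul, mul_comm β]
    exact mul_le_mul_of_nonneg_left (hterm i hN.2) (hw i)
  · intro i _
    apply Integrable.const_mul
    simp_rw [hrew]
    exact integrable_finsetSum _ (fun c _ => hi i c)

theorem conv_upper (α : ℝ) (hα : α ∈ Ioo (0:ℝ) 1) (A : ℝ) (hA : 0 < A) (a : ℝ → ℝ)
    (hac : Continuous a) (ha1 : a 1 = A)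
    (R : ℕ → ℝ → ℝ) (hR : TendstoUniformlyOn R a atTop (Icc 0 1))
    (r : ℕ → ℝ) (hr : ∀ k, r k ∈ Icc 0 α) (hfix : ∀ k, α * R k (r k) = r k * R k 1)
    (s : ℝ) (hs : s = sSup {r ∈ Icc (0:ℝ) 1 | r / α ≤ a r / A}) (ε : ℝ) (hε : 0 < ε) :
    ∀ᶠ k in atTop, r k < s + ε := by
  have hα0 := hα.1
  by_cases hne : (Icc (s + ε) α).Nonempty
  swap
  · rw [nonempty_Icc, not_le] at hne
    exact Eventually.of_forall fun k => lt_of_le_of_lt (hr k).2 hne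
  have hbdd : BddAbove {r ∈ Icc (0:ℝ) 1 | r / α ≤ a r / A} := ⟨1, fun x hx => hx.1.2⟩
  have hs0 : 0 ≤ s := by rw [hs]; exact Real.sSup_nonneg fun x hx => hx.1.1
  obtain ⟨x, hx, hmin⟩ := isCompact_Icc.exists_isMinOn hne
    (f := fun r => r * A - α * a r) (by fun_prop)
  have hxpos : 0 < x * A - α * a x := by
    by_contra hcon
    push Not at hcon
    have : x ∈ {r ∈ Icc (0:ℝ) 1 | r / α ≤ a r / A} := by
      refine ⟨⟨by linarith [hx.1], by linarith [hx.2, hα.2]⟩, ?_⟩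
      rw [div_le_div_iff₀ hα0 hA]; linarith
    have := le_csSup hbdd this
    rw [← hs] at this
    linarith [hx.1]
  set δ := x * A - α * a x with hδ
  have hunif := Metric.tendstoUniformlyOn_iff.1 hR (δ / 4) (by linarith)
  filter_upwards [hunif] with k hk
  by_contra hcon
  push Not at hcon
  have h1 := hmin (show r k ∈ Icc (s + ε) α from ⟨hcon, (hr k).2⟩)
  simp only [mem_ofPred_eq] at h1
  have h2 := hk (r k) ⟨(hr k).1, by linarith [(hr k).2, hα.2]⟩
  have h3 := hk 1 ⟨zero_le_one, le_rfl⟩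
  rw [Real.dist_eq, abs_lt] at h2 h3
  have h4 := hfix k
  rw [ha1] at h3
  have h5 := (hr k).1
  have h6 : r k ≤ 1 := by linarith [(hr k).2, hα.2]
  have e1 : r k * (A - R k 1) ≤ δ / 4 := by nlinarith
  have e2 : α * (R k (r k) - a (r k)) ≤ δ / 4 := by nlinarith [hα.2]
  nlinarith

theorem conv_main (α : ℝ) (hα : α ∈ Ioo (0:ℝ) 1) (A : ℝ) (hA : 0 < A) (a b : ℝ → ℝ)
    (hac : Continuous a) (hbc : Continuous b) (ha1 : a 1 = A) (ha0 : 0 ≤ a 0)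
    (R RU : ℕ → ℝ → ℝ) (hR : TendstoUniformlyOn R a atTop (Icc 0 1))
    (hRU : TendstoUniformlyOn RU b atTop (Icc 0 1))
    (r : ℕ → ℝ) (hr : ∀ k, r k ∈ Icc 0 α) (hfix : ∀ k, α * R k (r k) = r k * R k 1)
    (hmax : ∀ k, ∀ x ∈ Icc (0:ℝ) 1, x * R k 1 ≤ α * R k x → x ≤ r k)
    (s : ℝ) (hs : s = sSup {r ∈ Icc (0:ℝ) 1 | r / α ≤ a r / A}) (hs0 : 0 < s)
    (ha2 : ∀ O : Set ℝ, IsOpen O → s ∈ O →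
        ∃ s₁ ∈ O ∩ Set.Icc (0:ℝ) 1, s₁ / α < a s₁ / A) :
    0 < a s ∧ Tendsto (fun k => RU k (r k) / R k (r k)) atTop (nhds (b s / a s)) := by
  have hα0 := hα.1
  have hbdd : BddAbove {r ∈ Icc (0:ℝ) 1 | r / α ≤ a r / A} := ⟨1, fun x hx => hx.1.2⟩
  have hcl : IsClosed {r ∈ Icc (0:ℝ) 1 | r / α ≤ a r / A} := by
    have : {r ∈ Icc (0:ℝ) 1 | r / α ≤ a r / A} = Icc (0:ℝ) 1 ∩ {r | r / α ≤ a r / A} := rfl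
    rw [this]
    exact isClosed_Icc.inter (isClosed_le (by fun_prop) (by fun_prop))
  have hmem := hcl.csSup_mem
    ⟨0, ⟨le_rfl, zero_le_one⟩, by rw [zero_div]; exact div_nonneg ha0 hA.le⟩ hbdd
  rw [← hs] at hmem
  have hpos : 0 < a s := by
    have h := hmem.2
    rw [div_le_div_iff₀ hα0 hA] at h
    by_contra hc
    push Not at hc
    nlinarith [mul_pos hs0 hA]
  refine ⟨hpos, ?_⟩
  have hrt : Tendsto r atTop (nhds s) := by
    rw [Metric.tendsto_atTop']
    intro ε hε
    obtain ⟨s₁, ⟨h1, h1'⟩, h2⟩ := ha2 (Ioo (s - ε) (s + ε)) isOpen_Ioo ⟨by linarith, by linarith⟩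
    have hlow : ∀ᶠ k in atTop, s₁ * R k 1 < α * R k s₁ := by
      refine Tendsto.eventually_lt ((hR.tendsto_at (x := 1) ⟨zero_le_one, le_rfl⟩).const_mul s₁)
        ((hR.tendsto_at h1').const_mul α) ?_
      rw [div_lt_div_iff₀ hα0 hA] at h2
      rw [ha1]; linarith
    have := hlow.and (conv_upper α hα A hA a hac ha1 R hR r hr hfix s hs ε hε)
    obtain ⟨n, hn⟩ := eventually_atTop.1 this
    refine ⟨n, fun k hk => ?_⟩
    obtain ⟨q1, q2⟩ := hn k hk.le
    have := hmax k s₁ h1' q1.le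
    rw [Real.dist_eq, abs_lt]
    constructor <;> linarith [h1.1]
  have hrw : Tendsto r atTop (nhdsWithin s (Icc 0 1)) :=
    tendsto_nhdsWithin_iff.2 ⟨hrt, Eventually.of_forall fun k =>
      ⟨(hr k).1, by linarith [(hr k).2, hα.2]⟩⟩
  exact (hRU.tendsto_comp hbc.continuousWithinAt hrw).div
    (hR.tendsto_comp hac.continuousWithinAt hrw) hpos.ne'

theorem cdf_cont {E : Type*} [MeasurableSpace E] (ν : Measure E) [IsFiniteMeasure ν]
    (q : E → ℝ) (hq : Measurable q) (B : Set E) (hB : MeasurableSet B)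
    (h : ∀ t, ν {s ∈ B | q s = t} = 0) : Continuous (fun r => (ν (B ∩ {s | q s ≤ r})).toReal) := by
  have e : ∀ r, (ν (B ∩ {s | q s ≤ r})).toReal
      = ∫ s, (B ∩ {s | q s ≤ r}).indicator (fun _ => (1:ℝ)) s ∂ν := by
    intro r
    rw [integral_indicator_const _ (hB.inter (measurableSet_le hq measurable_const))]
    simp [Measure.real]
  simp_rw [e]
  rw [continuous_iff_continuousAt]
  intro r0
  refine continuousAt_of_dominated (bound := fun _ => 1) ?_ ?_ (integrable_const _) ?_
  · refine Eventually.of_forall fun r => ?_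
    exact (measurable_const.indicator
      (hB.inter (measurableSet_le hq measurable_const))).aestronglyMeasurable
  · refine Eventually.of_forall fun r => ae_of_all _ fun s => ?_
    exact (norm_indicator_le_norm_self _ _).trans (by simp)
  · have : ∀ᵐ s ∂ν, ¬ (s ∈ B ∧ q s = r0) := by
      rw [ae_iff]; simpa using h r0
    filter_upwards [this] with s hs
    by_cases hsB : s ∈ B
    · have hne : q s ≠ r0 := fun h => hs ⟨hsB, h⟩
      rcases lt_or_gt_of_ne hne with hlt | hgt
      · refine (continuousAt_const (y := (1:ℝ))).congr ?_
        filter_upwards [lt_mem_nhds hlt] with r hr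
        rw [indicator_of_mem]
        exact ⟨hsB, hr.le⟩
      · refine (continuousAt_const (y := (0:ℝ))).congr ?_
        filter_upwards [gt_mem_nhds hgt] with r hr
        rw [indicator_of_notMem]
        rintro ⟨_, h⟩
        exact absurd hr (not_lt_of_ge h)
    · refine (continuousAt_const (y := (0:ℝ))).congr (Eventually.of_forall fun r => ?_)
      exact (indicator_of_notMem (fun h => hsB h.1) _).symm

theorem grid_sum {E : Type*} (S : Finset E) (f : E → ℝ) (q : E → Prop) :
    ∑ i with q ((S.equivFin.symm i : S) : E), f ((S.equivFin.symm i : S) : E)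
      = ∑ s ∈ S.filter q, f s := by
  rw [Finset.sum_filter, Finset.sum_filter]
  rw [Equiv.sum_comp S.equivFin.symm (fun s : S => if q (s : E) then f (s : E) else 0)]
  exact Finset.sum_coe_sort S (fun s => if q s then f s else 0)

theorem grid_sum_all {E : Type*} (S : Finset E) (f : E → ℝ) :
    ∑ i, f ((S.equivFin.symm i : S) : E) = ∑ s ∈ S, f s := by
  rw [Equiv.sum_comp S.equivFin.symm (fun s : S => f (s : E))]
  exact Finset.sum_coe_sort S f

/-- control of the functional FDR: suppose there exist nonempty finite nested
grids `S_1 ⊆ S_2 ⊆ ⋯ ⊆ T` such that almost surely the realized p-value function `p_ω` satisfies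
(G1w) and (G2w); that almost surely `p_ω` satisfies (a1)–(a3); that the process `(p(·,t))_{t∈T}`
is PRDS on `U`; that the null p-values are superuniform; and that `ω ↦ Q(ω)` is measurable.
Then the functional Benjamini–Hochberg procedure at level `α` controls the functional false
discovery rate: `E[Q] ≤ α·ν(U)/ν(T) ≤ α`, where `Q(ω) = ν(V)/ν(V ∪ S)` (or `0` if
`ν(V ∪ S) = 0`) with `V = U ∩ {t : p_ω t ≤ α*}` and `S = {t ∈ T : p_ω t ≤ α*} \ U`. -/
theorem fBH_controls_fFDR {d : ℕ}
    (T : Set (EuclideanSpace ℝ (Fin d)))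
    (hT_open : IsOpen T) (hT_bdd : Bornology.IsBounded T) (hT_ne : T.Nonempty)
    (hT_norm : volume T = 1)
    -- weight function and weighted measure ν = f·μ
    (f : EuclideanSpace ℝ (Fin d) → ℝ) (hf_meas : Measurable f)
    (hf_pos : ∀ t ∈ T, 0 < f t) (hf_bdd : ∃ C : ℝ, ∀ t ∈ T, f t ≤ C)
    (ν : Measure (EuclideanSpace ℝ (Fin d)))
    (hν : ν = (volume.restrict T).withDensity (fun x => ENNReal.ofReal (f x)))
    (U : Set (EuclideanSpace ℝ (Fin d))) (hU_sub : U ⊆ T) (hU_meas : MeasurableSet U)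
    (α : ℝ) (hα : α ∈ Set.Ioo (0:ℝ) 1)
    {Ω : Type*} [MeasurableSpace Ω] (P : Measure Ω) [IsProbabilityMeasure P]
    -- the random p-value function
    (p : Ω → EuclideanSpace ℝ (Fin d) → ℝ)
    (hp_meas : ∀ t, Measurable (fun ω => p ω t))
    (hp_meas' : ∀ ω, Measurable (p ω))
    (hp_val : ∀ ω, ∀ t ∈ T, p ω t ∈ Set.Icc (0:ℝ) 1)
    -- realized cumulated p-value functions and adjusted thresholds
    (a : Ω → ℝ → ℝ) (ha : ∀ ω r, a ω r = (ν {s ∈ T | p ω s ≤ r}).toReal)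
    (αStar : Ω → ℝ)
    (hαStar : ∀ ω, αStar ω = sSup {r ∈ Set.Icc (0:ℝ) 1 | r / α ≤ a ω r / (ν T).toReal})
    -- false rejections V, true rejections S', and the false discovery proportion Q
    (V Sr : Ω → Set (EuclideanSpace ℝ (Fin d)))
    (hV : ∀ ω, V ω = U ∩ {t | p ω t ≤ αStar ω})
    (hSr : ∀ ω, Sr ω = {t ∈ T | p ω t ≤ αStar ω} \ U)
    (Q : Ω → ℝ)
    (hQ : ∀ ω, Q ω = if 0 < ν (V ω ∪ Sr ω)
      then (ν (V ω)).toReal / (ν (V ω ∪ Sr ω)).toReal else 0)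
    (hQ_meas : Measurable Q)
    -- there exist nested grids along which, almost surely, (G1w) and (G2w) hold
    (hgrids : ∃ S : ℕ → Finset (EuclideanSpace ℝ (Fin d)),
      (∀ k, (S k).Nonempty) ∧ (∀ k, ↑(S k) ⊆ T) ∧ (∀ k, S k ⊆ S (k + 1)) ∧
      ∀ᵐ ω ∂P,
        TendstoUniformlyOn
          (fun k r => (∑ s ∈ (S k).filter (fun s => p ω s ≤ r), f s) / (S k).card)
          (fun r => (ν {s ∈ T | p ω s ≤ r}).toReal) atTop (Set.Icc 0 1) ∧
        TendstoUniformlyOn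
          (fun k r => (∑ s ∈ (S k).filter (fun s => s ∈ U ∧ p ω s ≤ r), f s) / (S k).card)
          (fun r => (ν (U ∩ {s | p ω s ≤ r})).toReal) atTop (Set.Icc 0 1))
    -- almost surely (a1)–(a3) hold for the realized p-value function
    (hae : ∀ᵐ ω ∂P,
      (∀ t ∈ Set.Icc (0:ℝ) 1, ν {s ∈ T | p ω s = t} = 0) ∧
      (αStar ω ∈ Set.Ioc 0 α → ∀ O : Set ℝ, IsOpen O → αStar ω ∈ O →
        ∃ s₁ ∈ O ∩ Set.Icc (0:ℝ) 1, ∃ s₂ ∈ O ∩ Set.Icc (0:ℝ) 1,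
          s₁ / α < a ω s₁ / (ν T).toReal ∧ a ω s₂ / (ν T).toReal < s₂ / α) ∧
      (αStar ω = 0 → 0 < sInf (p ω '' T)))
    -- the process is PRDS on U
    (hPRDS : ∀ (l : ℕ) (t : Fin l → EuclideanSpace ℝ (Fin d)), (∀ j, t j ∈ T) →
      ∀ j : Fin l, t j ∈ U →
      ∀ D : Set (Fin l → ℝ), MeasurableSet D →
      (∀ x y : Fin l → ℝ, x ∈ D → x ≤ y → y ∈ D) →
      ∃ g : ℝ → ℝ, MonotoneOn g (Set.Icc 0 1) ∧
        (fun ω => g (p ω (t j))) =ᵐ[P]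
          P[(fun ω => D.indicator (fun _ => (1:ℝ)) (fun i => p ω (t i))) |
            MeasurableSpace.comap (fun ω => p ω (t j)) (inferInstance : MeasurableSpace ℝ)])
    -- superuniformity of the null p-values
    (hsuper : ∀ t ∈ U, ∀ x ∈ Set.Icc (0:ℝ) 1,
      P {ω | p ω t ≤ x} ≤ ENNReal.ofReal x) :
    (∫ ω, Q ω ∂P) ≤ α * (ν U).toReal / (ν T).toReal ∧
    α * (ν U).toReal / (ν T).toReal ≤ α := by
  have hα0 := hα.1
  have hTm : MeasurableSet T := hT_open.measurableSet
  obtain ⟨C, hC⟩ := hf_bdd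
  have hνle : ν univ ≤ ENNReal.ofReal C := by
    rw [hν, withDensity_apply _ MeasurableSet.univ, Measure.restrict_univ]
    calc ∫⁻ x in T, ENNReal.ofReal (f x) ≤ ∫⁻ x in T, ENNReal.ofReal C :=
          setLIntegral_mono' hTm (fun x hx => ENNReal.ofReal_le_ofReal (hC x hx))
      _ = ENNReal.ofReal C := by simp [hT_norm]
  haveI hfin : IsFiniteMeasure ν := ⟨hνle.trans_lt ENNReal.ofReal_lt_top⟩
  have hνT0 : ν T ≠ 0 := by
    intro h0
    rw [hν, withDensity_apply _ hTm, Measure.restrict_restrict hTm, inter_self,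
      setLIntegral_eq_zero_iff hTm hf_meas.ennreal_ofReal] at h0
    have : volume T = 0 := by
      refine measure_mono_null ?_ (ae_iff.1 h0)
      intro x hx h
      have := h hx
      rw [ENNReal.ofReal_eq_zero] at this
      linarith [hf_pos x hx]
    rw [hT_norm] at this
    exact one_ne_zero this
  have hA : 0 < (ν T).toReal := ENNReal.toReal_pos hνT0 (measure_ne_top _ _)
  have hUT : (ν U).toReal ≤ (ν T).toReal :=
    ENNReal.toReal_mono (measure_ne_top _ _) (measure_mono hU_sub)
  refine ⟨?_, ?_⟩
  swap
  · rw [div_le_iff₀ hA]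
    exact mul_le_mul_of_nonneg_left hUT hα0.le
  obtain ⟨S, hSne, hST, -, hSae⟩ := hgrids
  -- grid data
  set t : ∀ k, Fin (S k).card → EuclideanSpace ℝ (Fin d) :=
    fun k i => (((S k).equivFin.symm i : S k) : EuclideanSpace ℝ (Fin d)) with ht
  have htS : ∀ k i, t k i ∈ S k := fun k i => ((S k).equivFin.symm i).2
  have htT : ∀ k i, t k i ∈ T := fun k i => hST k (htS k i)
  set W : ℕ → ℝ := fun k => ∑ s ∈ S k, f s with hW
  have hWpos : ∀ k, 0 < W k := fun k =>
    Finset.sum_pos (fun s hs => hf_pos s (hST k hs)) (hSne k)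
  have hcard : ∀ k, (0:ℝ) < (S k).card := fun k => by
    exact_mod_cast Finset.card_pos.2 (hSne k)
  set w : ∀ k, Fin (S k).card → ℝ := fun k i => f (t k i) with hw
  have hw0 : ∀ k i, 0 ≤ w k i := fun k i => (hf_pos _ (htT k i)).le
  have hwW : ∀ k, ∑ i, w k i = W k := fun k => grid_sum_all (S k) f
  set N : ∀ k, Fin (S k).card → Prop := fun k i => t k i ∈ U with hN
  set β : ℕ → ℝ := fun k => α / W k with hβ
  have hβ0 : ∀ k, 0 ≤ β k := fun k => div_nonneg hα0.le (hWpos k).le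
  have hβW : ∀ k, β k * W k = α := fun k => div_mul_cancel₀ _ (hWpos k).ne'
  set X : ∀ k, Ω → Fin (S k).card → ℝ := fun k ω i => p ω (t k i) with hX
  set WU : ℕ → ℝ := fun k => ∑ s ∈ (S k).filter (fun s => s ∈ U), f s with hWU
  have hdisc : ∀ k, ∫ ω, bhQ (w k) (N k) (β k) (X k ω) ∂P ≤ β k * WU k := by
    intro k
    have h := discrete_fdr (w k) (hw0 k) (N k) (β k) (hβ0 k) (by rw [hwW, hβW]; exact hα.2.le)
      P (X k) (fun i => hp_meas (t k i)) (fun ω i => hp_val ω _ (htT k i))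
      (fun i hi x hx => ENNReal.toReal_le_of_le_ofReal hx.1 (hsuper (t k i) hi x hx))
      (fun j hj D hD hDm => hPRDS _ (t k) (htT k) j hj D hD hDm)
    refine h.trans (le_of_eq ?_)
    congr 1
    exact grid_sum (S k) f (fun s => s ∈ U)
  -- limit of the right-hand side
  have hp1 : ∀ ω, {s ∈ T | p ω s ≤ 1} = T := fun ω => by
    ext s
    exact ⟨fun h => h.1, fun h => ⟨h, (hp_val ω s h).2⟩⟩
  have hp1U : ∀ ω, U ∩ {s | p ω s ≤ 1} = U := fun ω => by
    ext s
    exact ⟨fun h => h.1, fun h => ⟨h, (hp_val ω s (hU_sub h)).2⟩⟩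
  have hR1 : ∀ ω k, ∑ s ∈ (S k).filter (fun s => p ω s ≤ 1), f s = W k := by
    intro ω k
    rw [Finset.filter_true_of_mem]
    exact fun s hs => (hp_val ω s (hST k hs)).2
  have hlim : Tendsto (fun k => β k * WU k) atTop (nhds (α * (ν U).toReal / (ν T).toReal)) := by
    obtain ⟨ω, h1, h2⟩ := hSae.exists
    have h1' := h1.tendsto_at (x := 1) ⟨zero_le_one, le_rfl⟩
    have h2' := h2.tendsto_at (x := 1) ⟨zero_le_one, le_rfl⟩
    simp only [hp1, hp1U, hR1] at h1' h2'
    have h3 := (h2'.const_mul α).div h1' hA.ne'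
    refine h3.congr fun k => ?_
    have : ∑ s ∈ (S k).filter (fun s => s ∈ U ∧ p ω s ≤ 1), f s = WU k := by
      apply Finset.sum_congr _ (fun _ _ => rfl)
      ext s
      simp only [Finset.mem_filter]
      exact ⟨fun h => ⟨h.1, h.2.1⟩, fun h => ⟨h.1, h.2, (hp_val ω s (hST k h.1)).2⟩⟩
    simp only [Pi.div_apply, this, hβ]
    have := (hcard k).ne'
    have := (hWpos k).ne'
    field_simp
  -- a.s. convergence of the discrete proportions
  have hconv : ∀ᵐ ω ∂P, Tendsto (fun k => bhQ (w k) (N k) (β k) (X k ω)) atTop (nhds (Q ω)) := by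
    filter_upwards [hSae, hae] with ω hω1 hω2
    obtain ⟨hG1, hG2⟩ := hω1
    obtain ⟨ha1, ha2, ha3⟩ := hω2
    set r : ℕ → ℝ := fun k => β k * bhRho (w k) (β k) (X k ω) with hr
    set R : ℕ → ℝ → ℝ :=
      fun k r => (∑ s ∈ (S k).filter (fun s => p ω s ≤ r), f s) / (S k).card with hR
    set RU : ℕ → ℝ → ℝ :=
      fun k r => (∑ s ∈ (S k).filter (fun s => s ∈ U ∧ p ω s ≤ r), f s) / (S k).card with hRU
    have hsumR : ∀ k x, ∑ i with X k ω i ≤ x, w k i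
        = ∑ s ∈ (S k).filter (fun s => p ω s ≤ x), f s :=
      fun k x => by convert grid_sum (S k) f (fun s => p ω s ≤ x)
    have hsumRU : ∀ k x, ∑ i with N k i ∧ X k ω i ≤ x, w k i
        = ∑ s ∈ (S k).filter (fun s => s ∈ U ∧ p ω s ≤ x), f s :=
      fun k x => by convert grid_sum (S k) f (fun s => s ∈ U ∧ p ω s ≤ x)
    have hRr : ∀ k, R k (r k) = bhRho (w k) (β k) (X k ω) / (S k).card := by
      intro k
      simp only [hR]
      rw [← hsumR, hr]
      simp only
      rw [bhRho_sum (w k) (hw0 k) (β k) (hβ0 k) (X k ω)]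
    have hQk : ∀ k, bhQ (w k) (N k) (β k) (X k ω) = RU k (r k) / R k (r k) := by
      intro k
      rw [hRr]
      simp only [hRU]
      rw [← hsumRU, bhQ, div_div_div_cancel_right₀ (hcard k).ne']
    have hR1' : ∀ k, R k 1 = W k / (S k).card := fun k => by simp only [hR, hR1]
    have hrmem : ∀ k, r k ∈ Icc 0 α := by
      intro k
      refine ⟨mul_nonneg (hβ0 k) (bhRho_nonneg _ _ _), ?_⟩
      rw [← hβW k]
      refine mul_le_mul_of_nonneg_left ?_ (hβ0 k)
      rw [← hwW k]
      exact bhRho_le_total _ (hw0 k) _ _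
    have hfix : ∀ k, α * R k (r k) = r k * R k 1 := by
      intro k
      rw [hRr, hR1', ← hβW k]
      simp only [hr]
      ring
    have hmax : ∀ k, ∀ x ∈ Icc (0:ℝ) 1, x * R k 1 ≤ α * R k x → x ≤ r k := by
      intro k x hx h
      apply bhRho_max _ _ (hβ0 k)
      rw [hsumR]
      rw [hR1'] at h
      simp only [hR] at h
      rw [← mul_div_assoc, ← mul_div_assoc, div_le_div_iff_of_pos_right (hcard k)] at h
      simp only [hβ]
      rw [div_mul_eq_mul_div, le_div_iff₀ (hWpos k)]
      exact h
    have hp_null : ∀ x : ℝ, ν {s ∈ T | p ω s = x} = 0 := by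
      intro x
      by_cases hx : x ∈ Icc (0:ℝ) 1
      · exact ha1 x hx
      · have : {s ∈ T | p ω s = x} = ∅ := by
          ext s
          constructor
          · rintro ⟨h1, h2⟩
            exact hx (h2 ▸ hp_val ω s h1)
          · exact fun h => h.elim
        rw [this, measure_empty]
    have hac : Continuous (fun r => (ν {s ∈ T | p ω s ≤ r}).toReal) :=
      cdf_cont ν (p ω) (hp_meas' ω) T hTm hp_null
    have hbc : Continuous (fun r => (ν (U ∩ {s | p ω s ≤ r})).toReal) :=
      cdf_cont ν (p ω) (hp_meas' ω) U hU_meas (fun x =>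
        measure_mono_null (show {s ∈ U | p ω s = x} ⊆ {s ∈ T | p ω s = x} from
          fun s h => ⟨hU_sub h.1, h.2⟩) (hp_null x))
    have hunion : V ω ∪ Sr ω = {s ∈ T | p ω s ≤ αStar ω} := by
      rw [hV, hSr]
      ext s
      constructor
      · rintro (h | h)
        · exact ⟨hU_sub h.1, h.2⟩
        · exact h.1
      · intro h
        by_cases hs : s ∈ U
        · exact Or.inl ⟨hs, h.2⟩
        · exact Or.inr ⟨h, hs⟩
    have hs := hαStar ω
    simp only [ha] at hs ha2
    have ha11 : (ν {s ∈ T | p ω s ≤ 1}).toReal = (ν T).toReal := by rw [hp1]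
    have hs0 : 0 ≤ αStar ω := by rw [hs]; exact Real.sSup_nonneg fun x hx => hx.1.1
    simp_rw [hQk]
    rcases hs0.eq_or_lt with h0 | h0
    · -- zero threshold
      have hδ := ha3 h0.symm
      have hlow : ∀ s ∈ T, sInf (p ω '' T) ≤ p ω s := fun s hs =>
        csInf_le ⟨0, by rintro _ ⟨x, hx, rfl⟩; exact (hp_val ω x hx).1⟩ ⟨s, hs, rfl⟩
      have hQ0 : Q ω = 0 := by
        rw [hQ, hunion]
        have : {s ∈ T | p ω s ≤ αStar ω} = ∅ := by
          ext s
          constructor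
          · rintro ⟨h1, h2⟩
            have := hlow s h1
            exact absurd hδ (not_lt_of_ge (by linarith))
          · exact fun h => h.elim
        rw [this]
        simp
      rw [hQ0]
      refine tendsto_const_nhds.congr' ?_
      filter_upwards [conv_upper α hα _ hA _ hac ha11 R hG1 r hrmem hfix _ hs _ hδ] with k hk
      have : RU k (r k) = 0 := by
        simp only [hRU]
        rw [Finset.filter_false_of_mem]
        · simp
        · rintro s hs ⟨_, h⟩
          have := hlow s (hST k hs)
          linarith
      rw [this, zero_div]
    · have hsα : αStar ω ≤ α := by
        rw [hs]
        apply Real.sSup_le _ hα0.le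
        rintro x ⟨_, hx⟩
        have h1 : (ν {s ∈ T | p ω s ≤ x}).toReal / (ν T).toReal ≤ 1 := by
          apply div_le_one_of_le₀ _ hA.le
          exact ENNReal.toReal_mono (measure_ne_top _ _) (measure_mono fun s h => h.1)
        have h2 := hx.trans h1
        rwa [div_le_one hα0] at h2
      obtain ⟨hpos, hten⟩ := conv_main α hα _ hA _ _ hac hbc ha11 ENNReal.toReal_nonneg R RU
        hG1 hG2 r hrmem hfix hmax _ hs h0 (fun O hO hsO => by
          obtain ⟨s₁, h1, s₂, _, h2, _⟩ := ha2 ⟨h0, hsα⟩ O hO hsO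
          exact ⟨s₁, h1, h2⟩)
      have hQe : Q ω = (ν (U ∩ {s | p ω s ≤ αStar ω})).toReal
          / (ν {s ∈ T | p ω s ≤ αStar ω}).toReal := by
        rw [hQ, hunion, hV, if_pos (ENNReal.toReal_pos_iff.1 hpos).1]
      rw [hQe]
      exact hten
  have hint : Tendsto (fun k => ∫ ω, bhQ (w k) (N k) (β k) (X k ω) ∂P) atTop
      (nhds (∫ ω, Q ω ∂P)) := by
    refine tendsto_integral_of_dominated_convergence (fun _ => (1:ℝ)) ?_ (integrable_const _) ?_ hconv
    · intro k
      exact ((bhQ_meas _ _ _).comp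
        (measurable_pi_iff.2 fun i => hp_meas (t k i))).aestronglyMeasurable
    · intro k
      refine ae_of_all _ fun ω => ?_
      rw [Real.norm_eq_abs, abs_of_nonneg (bhQ_nonneg _ (hw0 k) _ _ _)]
      exact bhQ_le_one _ (hw0 k) _ _ (hβ0 k) _
  exact le_of_tendsto_of_tendsto' hint hlim hdisc
end

section
/- Assume (G1w), (G2w) and (a1)–(a3) hold. Then for every t ∈ ⋃_m S_m with p(t) ≠ α*, the sequence of truth values of the event (t ∈ S_k and p(t) ≤ b_k) is eventually constant in k; that is, the null hypothesis at t is eventually always rejected, or eventually always accepted, by the step-k weighted Benjamini–Hochberg procedures. -/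
open Filter Set MeasureTheory
open scoped Classical

theorem aux_rc {E : Type*} [MeasurableSpace E] (ν : Measure E) [IsFiniteMeasure ν] (T : Set E)
    (hT : MeasurableSet T) (p : E → ℝ) (hp : Measurable p) (r : ℝ) :
    Tendsto (fun r => (ν {s ∈ T | p s ≤ r}).toReal) (nhdsWithin r (Ioi r))
      (nhds (ν {s ∈ T | p s ≤ r}).toReal) := by
  have h := tendsto_measure_biInter_gt (μ := ν) (s := fun r : ℝ => {s | s ∈ T ∧ p s ≤ r}) (a := r)
    (fun i _ => (hT.inter (measurableSet_le hp measurable_const)).nullMeasurableSet)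
    (fun i j _ hij x hx => ⟨hx.1, hx.2.trans hij⟩) ⟨r + 1, by linarith, measure_ne_top _ _⟩
  have e : (⋂ i > r, {s | s ∈ T ∧ p s ≤ i}) = {s | s ∈ T ∧ p s ≤ r} := by
    ext x
    simp only [mem_iInter, mem_setOf_eq]
    constructor
    · intro hx
      exact ⟨(hx (r + 1) (by simp)).1, le_of_forall_gt_imp_ge_of_dense fun c hc => (hx c hc).2⟩
    · intro hx i hi
      exact ⟨hx.1, hx.2.trans (le_of_lt hi)⟩
  rw [e] at h
  exact (ENNReal.tendsto_toReal (measure_ne_top _ _)).comp h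

theorem aux_usc (a : ℝ → ℝ) (hm : Monotone a)
    (hrc : ∀ r, Tendsto a (nhdsWithin r (Ioi r)) (nhds (a r))) (α A : ℝ) (hα : 0 < α)
    (K : Set ℝ) :
    UpperSemicontinuousOn (fun r => α * a r - r * A) K := by
  intro r _
  apply UpperSemicontinuousAt.upperSemicontinuousWithinAt
  have h1 : UpperSemicontinuousAt a r := by
    intro y hy
    have h2 := (hrc r).eventually (gt_mem_nhds hy)
    rw [← nhdsLE_sup_nhdsGT, eventually_sup]
    refine ⟨?_, h2⟩
    filter_upwards [self_mem_nhdsWithin] with x hx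
    exact (hm hx).trans_lt hy
  intro y hy
  have hc : Tendsto (fun x : ℝ => (y + x * A) / α) (nhds r) (nhds ((y + r * A) / α)) := by
    apply Continuous.tendsto
    fun_prop
  have hlt : a r < (y + r * A) / α := by
    rw [lt_div_iff₀ hα]; simp only at hy; linarith
  obtain ⟨z, hz1, hz2⟩ := exists_between hlt
  filter_upwards [h1 z hz1, hc.eventually (lt_mem_nhds hz2)] with x hx1 hx2
  have := hx1.trans hx2
  rw [lt_div_iff₀ hα] at this
  linarith

/-- under the weighted grid approximation assumptions (G1w), (G2w) and the
regularity assumptions (a1)–(a3), for every grid point `t ∈ ⋃ m, S m` with `p t ≠ α*`, the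
event `(t ∈ S k ∧ p t ≤ b k)` is eventually constant in `k`: the null hypothesis at `t` is
eventually always rejected, or eventually always accepted, by the step-`k` weighted BH
procedures. -/
theorem fBH_weighted_eventually_rejected_or_accepted {d : ℕ}
    (T : Set (EuclideanSpace ℝ (Fin d)))
    (hT_open : IsOpen T) (hT_bdd : Bornology.IsBounded T) (hT_ne : T.Nonempty)
    (hT_norm : volume T = 1)
    -- weight function and weighted measure ν = f·μ
    (f : EuclideanSpace ℝ (Fin d) → ℝ) (hf_meas : Measurable f)
    (hf_pos : ∀ t ∈ T, 0 < f t) (hf_bdd : ∃ C : ℝ, ∀ t ∈ T, f t ≤ C)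
    (ν : Measure (EuclideanSpace ℝ (Fin d)))
    (hν : ν = (volume.restrict T).withDensity (fun x => ENNReal.ofReal (f x)))
    -- p-value function and true-null region
    (p : EuclideanSpace ℝ (Fin d) → ℝ) (hp_meas : Measurable p)
    (hp_val : ∀ t ∈ T, p t ∈ Set.Icc (0:ℝ) 1)
    (U : Set (EuclideanSpace ℝ (Fin d))) (hU_sub : U ⊆ T) (hU_meas : MeasurableSet U)
    (α : ℝ) (hα : α ∈ Set.Ioo (0:ℝ) 1)
    -- cumulated p-value function and adjusted threshold
    (a : ℝ → ℝ) (ha : ∀ r, a r = (ν {s ∈ T | p s ≤ r}).toReal)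
    (αStar : ℝ)
    (hαStar : αStar = sSup {r ∈ Set.Icc (0:ℝ) 1 | r / α ≤ a r / (ν T).toReal})
    -- nested grids and weighted empirical quantities
    (S : ℕ → Finset (EuclideanSpace ℝ (Fin d)))
    (hS_ne : ∀ k, (S k).Nonempty) (hS_sub : ∀ k, ↑(S k) ⊆ T)
    (hS_mono : ∀ k, S k ⊆ S (k + 1))
    (ak : ℕ → ℝ → ℝ)
    (hak : ∀ k r, ak k r = (∑ s ∈ (S k).filter (fun s => p s ≤ r), f s) / ∑ s ∈ S k, f s)
    (b : ℕ → ℝ) (hb : ∀ k, b k = sSup {r ∈ Set.Icc (0:ℝ) 1 | r / α ≤ ak k r})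
    -- (G1w)
    (hG1w : TendstoUniformlyOn
      (fun k r => (∑ s ∈ (S k).filter (fun s => p s ≤ r), f s) / (S k).card)
      (fun r => (ν {s ∈ T | p s ≤ r}).toReal) atTop (Set.Icc 0 1))
    -- (G2w)
    (hG2w : TendstoUniformlyOn
      (fun k r => (∑ s ∈ (S k).filter (fun s => s ∈ U ∧ p s ≤ r), f s) / (S k).card)
      (fun r => (ν (U ∩ {s | p s ≤ r})).toReal) atTop (Set.Icc 0 1))
    -- (a1)
    (ha1 : ∀ t ∈ Set.Icc (0:ℝ) 1, ν {s ∈ T | p s = t} = 0)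
    -- (a2)
    (ha2 : αStar ∈ Set.Ioc 0 α → ∀ O : Set ℝ, IsOpen O → αStar ∈ O →
      ∃ s₁ ∈ O ∩ Set.Icc (0:ℝ) 1, ∃ s₂ ∈ O ∩ Set.Icc (0:ℝ) 1,
        s₁ / α < a s₁ / (ν T).toReal ∧ a s₂ / (ν T).toReal < s₂ / α)
    -- (a3)
    (ha3 : αStar = 0 → 0 < sInf (p '' T)) :
    ∀ t ∈ ⋃ m, (S m : Set (EuclideanSpace ℝ (Fin d))), p t ≠ αStar →
      (∃ K, ∀ k ≥ K, t ∈ S k ∧ p t ≤ b k) ∨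
      (∃ K, ∀ k ≥ K, ¬(t ∈ S k ∧ p t ≤ b k)) := by
  have hTm := hT_open.measurableSet
  have hνfin : IsFiniteMeasure ν := by
    obtain ⟨C, hC⟩ := hf_bdd
    refine ⟨?_⟩
    rw [hν, withDensity_apply _ MeasurableSet.univ, Measure.restrict_univ]
    calc ∫⁻ x in T, ENNReal.ofReal (f x) ≤ ∫⁻ x in T, ENNReal.ofReal C :=
          setLIntegral_mono' hTm fun x hx => ENNReal.ofReal_le_ofReal (hC x hx)
      _ < ⊤ := by simp [hT_norm]
  have hApos : 0 < (ν T).toReal := by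
    refine ENNReal.toReal_pos ?_ (measure_ne_top _ _)
    rw [hν, withDensity_apply _ hTm, Measure.restrict_restrict hTm, inter_self]
    intro h0
    rw [lintegral_eq_zero_iff (by fun_prop), Filter.EventuallyEq, ae_restrict_iff' hTm] at h0
    have : volume T = 0 := by
      rw [measure_eq_zero_iff_ae_notMem]
      filter_upwards [h0] with x hx hxT
      have := hx hxT
      simp only [Pi.zero_apply, ENNReal.ofReal_eq_zero] at this
      linarith [hf_pos x hxT]
    simp [this] at hT_norm
  obtain ⟨hα0, hα1⟩ := hα
  set A := (ν T).toReal with hA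
  have ha_fun : a = fun r => (ν {s ∈ T | p s ≤ r}).toReal := funext ha
  have hmono : Monotone a := by
    intro x y hxy
    rw [ha, ha]
    exact ENNReal.toReal_mono (measure_ne_top _ _)
      (measure_mono fun s hs => ⟨hs.1, hs.2.trans hxy⟩)
  have haA : ∀ r, a r ≤ A := by
    intro r
    rw [ha]
    exact ENNReal.toReal_mono (measure_ne_top _ _) (measure_mono fun s hs => hs.1)
  have ha1A : a 1 = A := by
    rw [ha, hA]
    congr 2
    ext s
    exact ⟨fun h => h.1, fun h => ⟨h, (hp_val s h).2⟩⟩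
  have hf1 : ∀ k, (S k).filter (fun s => p s ≤ 1) = S k := by
    intro k
    rw [Finset.filter_eq_self]
    exact fun s hs => (hp_val s (hS_sub k hs)).2
  have hsum : ∀ k, 0 < ∑ s ∈ S k, f s := fun k =>
    Finset.sum_pos (fun s hs => hf_pos s (hS_sub k hs)) (hS_ne k)
  have hcard : ∀ k, (0:ℝ) < (S k).card := fun k => by exact_mod_cast (hS_ne k).card_pos
  -- key comparison
  have key : ∀ ε > 0, ∀ᶠ k in atTop, ∀ r ∈ Set.Icc (0:ℝ) 1, ∃ x m : ℝ, 0 < m ∧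
      ak k r = x / m ∧ |x - a r| < ε ∧ |m - A| < ε := by
    intro ε hε
    rw [Metric.tendstoUniformlyOn_iff] at hG1w
    filter_upwards [hG1w ε hε] with k hk r hr
    refine ⟨(∑ s ∈ (S k).filter (fun s => p s ≤ r), f s) / (S k).card,
      (∑ s ∈ S k, f s) / (S k).card, div_pos (hsum k) (hcard k), ?_, ?_, ?_⟩
    · rw [hak, div_div_div_cancel_right₀ (hcard k).ne']
    · have := hk r hr
      rw [dist_comm, Real.dist_eq] at this
      rwa [ha]
    · have := hk 1 (by simp)
      rw [dist_comm, Real.dist_eq, ← ha 1, ha1A] at this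
      rw [hf1] at this
      exact this
  have hbdd : BddAbove {r ∈ Set.Icc (0:ℝ) 1 | r / α ≤ a r / A} := ⟨1, fun r hr => hr.1.2⟩
  have hbddk : ∀ k, BddAbove {r ∈ Set.Icc (0:ℝ) 1 | r / α ≤ ak k r} := fun k =>
    ⟨1, fun r hr => hr.1.2⟩
  have hα0' : 0 ≤ αStar := by
    rw [hαStar]
    exact Real.sSup_nonneg fun r hr => hr.1.1
  have hαle : αStar ≤ α := by
    rw [hαStar]
    refine Real.sSup_le (fun r hr => ?_) hα0.le
    have h1 : a r / A ≤ 1 := (div_le_one hApos).2 (haA r)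
    exact (div_le_one hα0).1 (hr.2.trans h1)
  intro t ht hne
  obtain ⟨m, hm⟩ := mem_iUnion.1 ht
  have hSm : Monotone S := monotone_nat_of_le_succ hS_mono
  have htT : t ∈ T := hS_sub m hm
  obtain ⟨hp0, hp1⟩ := hp_val t htT
  rcases lt_or_gt_of_ne hne with hlt | hgt
  · left
    obtain ⟨s₁, hs₁, _, _, h1, _⟩ := ha2 ⟨hp0.trans_lt hlt, hαle⟩ (Ioi (p t)) isOpen_Ioi hlt
    rw [div_lt_div_iff₀ hα0 hApos] at h1
    obtain ⟨K, hK⟩ := eventually_atTop.1 (key ((a s₁ * α - s₁ * A) / 2) (by linarith))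
    refine ⟨max K m, fun k hk => ⟨hSm (le_of_max_le_right hk) hm, ?_⟩⟩
    obtain ⟨x, m', hm', he, hx, hmm⟩ := hK k (le_of_max_le_left hk) s₁ hs₁.2
    refine (le_of_lt hs₁.1).trans ?_
    rw [hb]
    refine le_csSup (hbddk k) ⟨hs₁.2, ?_⟩
    rw [he, div_le_div_iff₀ hα0 hm']
    obtain ⟨hs0, hs1⟩ := hs₁.2
    rw [abs_lt] at hx hmm
    nlinarith [mul_le_mul_of_nonneg_left hmm.2.le hs0, mul_le_mul_of_nonneg_right hx.1.le hα0.le]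
  · right
    obtain ⟨c, hc1, hc2⟩ := exists_between hgt
    have husc := aux_usc a hmono
      (fun r => by rw [ha_fun]; exact aux_rc ν T hTm p hp_meas r) α A hα0 (Set.Icc c 1)
    obtain ⟨r₀, hr₀, hmax⟩ := husc.exists_isMaxOn (nonempty_Icc.2 (hc2.le.trans hp1)) isCompact_Icc
    have hc0 : 0 ≤ c := hα0'.trans hc1.le
    have hneg : α * a r₀ - r₀ * A < 0 := by
      by_contra hcon
      have : r₀ ≤ αStar := by
        rw [hαStar]
        refine le_csSup hbdd ⟨⟨hc0.trans hr₀.1, hr₀.2⟩, ?_⟩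
        rw [div_le_div_iff₀ hα0 hApos]
        linarith
      linarith [hr₀.1]
    obtain ⟨K, hK⟩ := eventually_atTop.1 (key (-(α * a r₀ - r₀ * A) / 2) (by linarith))
    refine ⟨K, fun k hk hh => ?_⟩
    have : b k ≤ c := by
      rw [hb]
      refine Real.sSup_le (fun r hr => ?_) hc0
      by_contra! hcr
      obtain ⟨x, m', hm', he, hx, hmm⟩ := hK k hk r hr.1
      have h2 := hr.2
      rw [he, div_le_div_iff₀ hα0 hm'] at h2
      have h3 : α * a r - r * A ≤ α * a r₀ - r₀ * A := hmax ⟨hcr.le, hr.1.2⟩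
      rw [abs_lt] at hx hmm
      obtain ⟨hs0, hs1⟩ := hr.1
      nlinarith [mul_le_mul_of_nonneg_left hmm.1.le hs0,
        mul_le_mul_of_nonneg_right hx.2.le hα0.le]
    linarith [hh.2]
end

section
/- Suppose there is N_C ∈ ℕ such that #{s ∈ [0,D] : p(s) = t} ≤ N_C for every t ∈ (0,1]. Then sup_{r∈[0,1]} |#{s ∈ S_k : p(s) ≤ r}/#S_k − μ{s ∈ [0,D] : p(s) ≤ r}/D| → 0 as k → ∞. Moreover, if U ⊆ [0,D] is a finite union of disjoint intervals, then also sup_{r∈[0,1]} |#{s ∈ S_k ∩ U : p(s) ≤ r}/#S_k − μ(U ∩ {s : p(s) ≤ r})/D| → 0 as k → ∞. -/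
open Filter Set MeasureTheory
open scoped Classical

lemma aux_card (N : ℕ) (P : ℝ → Prop) [DecidablePred P] [DecidablePred fun j : ℕ => P (j : ℝ)] :
    ((Finset.Icc 1 N).filter (fun j => P (j : ℝ))).card =
      ((Finset.Icc 1 N).filter (fun j : ℕ => P (j : ℝ))).card := by
  symm
  refine Finset.card_bij (fun (j : ℕ) _ => (j : ℝ)) ?_ ?_ ?_
  · intro a ha
    rw [Finset.mem_filter] at ha ⊢
    refine ⟨?_, ha.2⟩
    simp only [Finset.bind_def, Finset.pure_def, Finset.mem_sup, Finset.mem_singleton]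
    exact ⟨a, ha.1, rfl⟩
  · intro a _ b _ h
    exact_mod_cast h
  · intro b hb
    rw [Finset.mem_filter] at hb
    obtain ⟨h1, h2⟩ := hb
    simp only [Finset.bind_def, Finset.pure_def, Finset.mem_sup, Finset.mem_singleton] at h1
    obtain ⟨a, ha, rfl⟩ := h1
    exact ⟨a, Finset.mem_filter.2 ⟨ha, h2⟩, rfl⟩

lemma aux_cell {D : ℝ} (hD : 0 < D) {N : ℕ} (hN : 0 < N) (x : ℝ) (j : ℕ) :
    (((j : ℝ) - 1) * D / N ≤ x ↔ (j : ℝ) - 1 ≤ x * N / D) ∧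
    (((j : ℝ) - 1) * D / N < x ↔ (j : ℝ) - 1 < x * N / D) ∧
    (x ≤ (j : ℝ) * D / N ↔ x * N / D ≤ j) := by
  have hN' : (0 : ℝ) < N := by exact_mod_cast hN
  refine ⟨?_, ?_, ?_⟩
  · rw [div_le_iff₀ hN', le_div_iff₀ hD]
  · rw [div_lt_iff₀ hN', lt_div_iff₀ hD]
  · rw [le_div_iff₀ hN', div_le_iff₀ hD]

lemma aux_vol {D : ℝ} (hD : 0 < D) {N : ℕ} (hN : 0 < N) (A : Set ℝ) (hA : A ⊆ Icc 0 D) :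
    (volume A).toReal = ∑ j ∈ Finset.Icc 1 N,
      (volume (Ioc (((j : ℝ) - 1) * D / N) ((j : ℝ) * D / N) ∩ A)).toReal := by
  have hN' : (0 : ℝ) < N := by exact_mod_cast hN
  have hU : (⋃ j ∈ Finset.Icc 1 N, Ioc (((j : ℝ) - 1) * D / N) ((j : ℝ) * D / N))
      = Ioc 0 D := by
    ext x
    simp only [mem_iUnion, Finset.mem_Icc, mem_Ioc, exists_prop]
    constructor
    · rintro ⟨j, ⟨h1, h2⟩, h3, h4⟩
      have h1' : (1 : ℝ) ≤ j := by exact_mod_cast h1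
      have h2' : (j : ℝ) ≤ N := by exact_mod_cast h2
      constructor
      · refine lt_of_le_of_lt ?_ h3
        have : 0 ≤ (j : ℝ) - 1 := by linarith
        positivity
      · refine h4.trans ?_
        rw [div_le_iff₀ hN']
        nlinarith
    · rintro ⟨h1, h2⟩
      have hpos : 0 < x * N / D := by positivity
      refine ⟨⌈x * N / D⌉₊, ⟨?_, ?_⟩, ?_, ?_⟩
      · exact Nat.ceil_pos.2 hpos
      · apply Nat.ceil_le.2
        rw [div_le_iff₀ hD]; nlinarith
      · rw [(aux_cell hD hN x _).2.1]
        have := Nat.ceil_lt_add_one hpos.le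
        linarith
      · rw [(aux_cell hD hN x _).2.2]
        exact Nat.le_ceil _
  have hdisj : Set.PairwiseDisjoint (↑(Finset.Icc 1 N))
      (fun j : ℕ => Ioc (((j : ℝ) - 1) * D / N) ((j : ℝ) * D / N)) := by
    intro i _ j _ hij
    rw [Function.onFun, Set.disjoint_left]
    rintro x ⟨a1, a2⟩ ⟨b1, b2⟩
    rw [(aux_cell hD hN x _).2.1] at a1 b1
    rw [(aux_cell hD hN x _).2.2] at a2 b2
    apply hij
    have h1 : (i : ℝ) < j + 1 := by linarith
    have h2 : (j : ℝ) < i + 1 := by linarith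
    have h1 : i < j + 1 := by exact_mod_cast h1
    have h2 : j < i + 1 := by exact_mod_cast h2
    omega
  have key := measure_biUnion_finset (μ := volume.restrict A) hdisj
    (fun _ _ => measurableSet_Ioc)
  rw [hU, Measure.restrict_apply measurableSet_Ioc] at key
  have h0 : volume A = volume (Ioc 0 D ∩ A) := by
    conv_lhs => rw [← inter_eq_self_of_subset_right hA]
    exact measure_congr ((Ioc_ae_eq_Icc (μ := volume) (a := (0:ℝ)) (b := D)).symm.inter
      (ae_eq_refl A))
  rw [h0, key, ENNReal.toReal_sum]
  · refine Finset.sum_congr rfl fun j _ => ?_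
    rw [Measure.restrict_apply measurableSet_Ioc]
  · intro j _
    rw [Measure.restrict_apply measurableSet_Ioc]
    exact ((measure_mono inter_subset_left).trans_lt measure_Ioc_lt_top).ne

lemma aux_bound {D : ℝ} (hD : 0 < D) {N : ℕ} (hN : 0 < N) (A : Set ℝ) (hA : A ⊆ Icc 0 D)
    (B : Finset ℕ)
    (hB : ∀ j ∈ Finset.Icc 1 N, j ∉ B →
      ∀ x ∈ Ioc (((j : ℝ) - 1) * D / N) ((j : ℝ) * D / N), (x ∈ A ↔ (j : ℝ) * D / N ∈ A)) :
    |(volume A).toReal / D -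
      (((Finset.Icc 1 N).filter (fun j : ℕ => (j : ℝ) * D / N ∈ A)).card : ℝ) / N|
      ≤ (B.card : ℝ) / N := by
  have hN' : (0 : ℝ) < N := by exact_mod_cast hN
  have hlen : ∀ j : ℕ, (volume (Ioc (((j : ℝ) - 1) * D / N) ((j : ℝ) * D / N))).toReal
      = D / N := by
    intro j
    rw [Real.volume_Ioc, ENNReal.toReal_ofReal]
    · ring
    · have : (j : ℝ) * D / N - ((j : ℝ) - 1) * D / N = D / N := by ring
      rw [this]; positivity
  have e : (volume A).toReal / D -
      (((Finset.Icc 1 N).filter (fun j : ℕ => (j : ℝ) * D / N ∈ A)).card : ℝ) / N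
      = (∑ j ∈ Finset.Icc 1 N,
        ((volume (Ioc (((j : ℝ) - 1) * D / N) ((j : ℝ) * D / N) ∩ A)).toReal
          - (if (j : ℝ) * D / N ∈ A then D / N else 0))) / D := by
    rw [Finset.sum_sub_distrib, ← aux_vol hD hN A hA, ← Finset.sum_filter, Finset.sum_const,
      nsmul_eq_mul]
    field_simp
  rw [e, abs_div, abs_of_pos hD, div_le_iff₀ hD]
  refine (Finset.abs_sum_le_sum_abs _ _).trans ?_
  have hstep : ∀ j ∈ Finset.Icc 1 N,
      |(volume (Ioc (((j : ℝ) - 1) * D / N) ((j : ℝ) * D / N) ∩ A)).toReal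
          - (if (j : ℝ) * D / N ∈ A then D / N else 0)| ≤ if j ∈ B then D / N else 0 := by
    intro j hj
    by_cases hjB : j ∈ B
    · rw [if_pos hjB]
      have h1 : (volume (Ioc (((j : ℝ) - 1) * D / N) ((j : ℝ) * D / N) ∩ A)).toReal ≤ D / N := by
        rw [← hlen j]
        exact ENNReal.toReal_mono measure_Ioc_lt_top.ne (measure_mono inter_subset_left)
      have h2 : 0 ≤ (volume (Ioc (((j : ℝ) - 1) * D / N) ((j : ℝ) * D / N) ∩ A)).toReal :=
        ENNReal.toReal_nonneg
      have h3 : 0 < D / N := by positivity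
      rw [abs_le]
      split_ifs <;> constructor <;> linarith
    · rw [if_neg hjB]
      have h := hB j hj hjB
      by_cases hm : (j : ℝ) * D / N ∈ A
      · rw [if_pos hm, inter_eq_self_of_subset_left (fun x hx => (h x hx).2 hm), hlen]
        simp
      · have : Ioc (((j : ℝ) - 1) * D / N) ((j : ℝ) * D / N) ∩ A = ∅ := by
          ext x
          simp only [mem_inter_iff, mem_empty_iff_false, iff_false, not_and]
          exact fun hx hxA => hm ((h x hx).1 hxA)
        rw [if_neg hm, this]
        simp
  refine (Finset.sum_le_sum hstep).trans ?_
  rw [← Finset.sum_filter, Finset.sum_const, nsmul_eq_mul]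
  have : (((Finset.Icc 1 N).filter (fun j => j ∈ B)).card : ℝ) ≤ B.card := by
    exact_mod_cast Finset.card_le_card (fun j hj => (Finset.mem_filter.1 hj).2)
  calc _ ≤ (B.card : ℝ) * (D / N) := by gcongr
    _ = _ := by ring

lemma aux_sub {D : ℝ} (hD : 0 < D) {N : ℕ} (hN : 0 < N) {j : ℕ} (hj : j ∈ Finset.Icc 1 N) :
    Icc (((j : ℝ) - 1) * D / N) ((j : ℝ) * D / N) ⊆ Icc 0 D := by
  have hN' : (0 : ℝ) < N := by exact_mod_cast hN
  rw [Finset.mem_Icc] at hj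
  have h1' : (1 : ℝ) ≤ j := by exact_mod_cast hj.1
  have h2' : (j : ℝ) ≤ N := by exact_mod_cast hj.2
  apply Icc_subset_Icc
  · have : 0 ≤ (j : ℝ) - 1 := by linarith
    positivity
  · rw [div_le_iff₀ hN']
    nlinarith

lemma aux_p {D : ℝ} (hD : 0 < D) {N : ℕ} (hN : 0 < N)
    (p : ℝ → ℝ) (hp_cont : ContinuousOn p (Set.Icc 0 D))
    (hp_val : Set.MapsTo p (Set.Icc 0 D) (Set.Icc 0 1))
    (N_C : ℕ)
    (hNC : ∀ t ∈ Set.Ioc (0:ℝ) 1, {s ∈ Set.Icc 0 D | p s = t}.encard ≤ N_C)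
    (r : ℝ) (hr : 0 ≤ r) :
    ((Finset.Icc 1 N).filter (fun j : ℕ =>
      ∃ x ∈ Icc (((j : ℝ) - 1) * D / N) ((j : ℝ) * D / N),
      ∃ y ∈ Icc (((j : ℝ) - 1) * D / N) ((j : ℝ) * D / N), p x ≤ r ∧ r < p y)).card
      ≤ 2 * N_C := by
  set B := (Finset.Icc 1 N).filter (fun j : ℕ =>
      ∃ x ∈ Icc (((j : ℝ) - 1) * D / N) ((j : ℝ) * D / N),
      ∃ y ∈ Icc (((j : ℝ) - 1) * D / N) ((j : ℝ) * D / N), p x ≤ r ∧ r < p y) with hBdef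
  rcases B.eq_empty_or_nonempty with hE | hne
  · rw [hE]; simp
  have hmem : ∀ j ∈ B, j ∈ Finset.Icc 1 N ∧
      ∃ x ∈ Icc (((j : ℝ) - 1) * D / N) ((j : ℝ) * D / N),
      ∃ y ∈ Icc (((j : ℝ) - 1) * D / N) ((j : ℝ) * D / N), p x ≤ r ∧ r < p y :=
    fun j hj => Finset.mem_filter.1 hj
  choose! hI x hx y hy hxr hyr using hmem
  obtain ⟨j0, hj0, hmin⟩ := B.exists_min_image (fun j => p (y j)) hne
  set t := p (y j0) with ht
  have htr : r < t := hyr j0 hj0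
  have ht1 : t ∈ Ioc (0 : ℝ) 1 :=
    ⟨by linarith, (hp_val (aux_sub hD hN (hI j0 hj0) (hy j0 hj0))).2⟩
  have hz : ∀ j ∈ B, ∃ z ∈ Icc (((j : ℝ) - 1) * D / N) ((j : ℝ) * D / N), p z = t := by
    intro j hj
    have hsub : uIcc (x j) (y j) ⊆ Icc (((j : ℝ) - 1) * D / N) ((j : ℝ) * D / N) :=
      ordConnected_Icc.uIcc_subset (hx j hj) (hy j hj)
    have := intermediate_value_uIcc
      (hp_cont.mono (hsub.trans (aux_sub hD hN (hI j hj))))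
    have htm : t ∈ uIcc (p (x j)) (p (y j)) := by
      rw [mem_uIcc]; left
      exact ⟨by linarith [hxr j hj], hmin j hj⟩
    obtain ⟨z, hz1, hz2⟩ := this htm
    exact ⟨z, hsub hz1, hz2⟩
  choose! z hzc hzt using hz
  have hL := hNC t ht1
  have hfin : {s ∈ Set.Icc 0 D | p s = t}.Finite :=
    Set.finite_of_encard_le_coe hL
  have hcard : hfin.toFinset.card ≤ N_C := by
    rw [hfin.encard_eq_coe_toFinset_card] at hL
    exact_mod_cast hL
  have hmaps : ∀ j ∈ B, z j ∈ hfin.toFinset := by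
    intro j hj
    rw [Set.Finite.mem_toFinset]
    exact ⟨aux_sub hD hN (hI j hj) (hzc j hj), hzt j hj⟩
  have hfib : ∀ w ∈ hfin.toFinset, (B.filter (fun j => z j = w)).card ≤ 2 := by
    intro w _
    refine (Finset.card_le_card (t := {⌈w * N / D⌉₊, ⌈w * N / D⌉₊ + 1}) ?_).trans
      Finset.card_le_two
    intro j hj
    rw [Finset.mem_filter] at hj
    obtain ⟨hj, rfl⟩ := hj
    have h := hzc j hj
    have h1 := (aux_cell hD hN (z j) j).1.1 h.1
    have h2 := (aux_cell hD hN (z j) j).2.2.1 h.2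
    have h3 : ⌈z j * N / D⌉₊ ≤ j := Nat.ceil_le.2 h2
    have h4 : (j : ℝ) ≤ ⌈z j * N / D⌉₊ + 1 := by
      have := Nat.le_ceil (z j * N / D)
      linarith
    have h4 : j ≤ ⌈z j * N / D⌉₊ + 1 := by exact_mod_cast h4
    rw [Finset.mem_insert, Finset.mem_singleton]
    omega
  have := Finset.card_le_mul_card_image_of_maps_to hmaps 2 hfib
  omega

lemma aux_I {D : ℝ} (hD : 0 < D) {N : ℕ} (hN : 0 < N) (I : Set ℝ) (hI : I.OrdConnected) :
    ((Finset.Icc 1 N).filter (fun j : ℕ =>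
      ∃ x ∈ Icc (((j : ℝ) - 1) * D / N) ((j : ℝ) * D / N),
      ∃ y ∈ Icc (((j : ℝ) - 1) * D / N) ((j : ℝ) * D / N), x ∈ I ∧ y ∉ I)).card
      ≤ 2 := by
  have hle : ∀ i j : ℕ, i < j → (i : ℝ) * D / N ≤ ((j : ℝ) - 1) * D / N := by
    intro i j hij
    have : (i : ℝ) + 1 ≤ j := by exact_mod_cast hij
    have : (i : ℝ) ≤ j - 1 := by linarith
    gcongr
  have hsub : ((Finset.Icc 1 N).filter (fun j : ℕ =>
      ∃ x ∈ Icc (((j : ℝ) - 1) * D / N) ((j : ℝ) * D / N),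
      ∃ y ∈ Icc (((j : ℝ) - 1) * D / N) ((j : ℝ) * D / N), x ∈ I ∧ y ∉ I)) ⊆
      ((Finset.Icc 1 N).filter (fun j : ℕ =>
      ∃ x ∈ Icc (((j : ℝ) - 1) * D / N) ((j : ℝ) * D / N),
      ∃ y ∈ Icc (((j : ℝ) - 1) * D / N) ((j : ℝ) * D / N), x ∈ I ∧ y ∉ I ∧ y ≤ x)) ∪
      ((Finset.Icc 1 N).filter (fun j : ℕ =>
      ∃ x ∈ Icc (((j : ℝ) - 1) * D / N) ((j : ℝ) * D / N),
      ∃ y ∈ Icc (((j : ℝ) - 1) * D / N) ((j : ℝ) * D / N), x ∈ I ∧ y ∉ I ∧ x ≤ y)) := by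
    intro j hj
    rw [Finset.mem_filter] at hj
    obtain ⟨hj, x, hx, y, hy, h1, h2⟩ := hj
    rw [Finset.mem_union, Finset.mem_filter, Finset.mem_filter]
    rcases le_total y x with h | h
    · left; exact ⟨hj, x, hx, y, hy, h1, h2, h⟩
    · right; exact ⟨hj, x, hx, y, hy, h1, h2, h⟩
  refine (Finset.card_le_card hsub).trans ((Finset.card_union_le _ _).trans ?_)
  refine Nat.add_le_add (b := 1) (d := 1) ?_ ?_
  · have key : ∀ i j : ℕ, i < j →
      (∃ x ∈ Icc (((i : ℝ) - 1) * D / N) ((i : ℝ) * D / N),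
      ∃ y ∈ Icc (((i : ℝ) - 1) * D / N) ((i : ℝ) * D / N), x ∈ I ∧ y ∉ I ∧ y ≤ x) →
      (∃ x ∈ Icc (((j : ℝ) - 1) * D / N) ((j : ℝ) * D / N),
      ∃ y ∈ Icc (((j : ℝ) - 1) * D / N) ((j : ℝ) * D / N), x ∈ I ∧ y ∉ I ∧ y ≤ x) → False := by
      rintro i j hij ⟨x, hx, y, hy, h1, h2, h3⟩ ⟨x', hx', y', hy', h1', h2', h3'⟩
      exact h2' (hI.out h1 h1' ⟨by linarith [hle i j hij, hx.2, hy'.1], h3'⟩)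
    rw [Finset.card_le_one]
    intro i hi j hj
    rw [Finset.mem_filter] at hi hj
    rcases lt_trichotomy i j with h | h | h
    · exact (key i j h hi.2 hj.2).elim
    · exact h
    · exact (key j i h hj.2 hi.2).elim
  · have key : ∀ i j : ℕ, i < j →
      (∃ x ∈ Icc (((i : ℝ) - 1) * D / N) ((i : ℝ) * D / N),
      ∃ y ∈ Icc (((i : ℝ) - 1) * D / N) ((i : ℝ) * D / N), x ∈ I ∧ y ∉ I ∧ x ≤ y) →
      (∃ x ∈ Icc (((j : ℝ) - 1) * D / N) ((j : ℝ) * D / N),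
      ∃ y ∈ Icc (((j : ℝ) - 1) * D / N) ((j : ℝ) * D / N), x ∈ I ∧ y ∉ I ∧ x ≤ y) → False := by
      rintro i j hij ⟨x, hx, y, hy, h1, h2, h3⟩ ⟨x', hx', y', hy', h1', h2', h3'⟩
      exact h2 (hI.out h1 h1' ⟨h3, by linarith [hle i j hij, hy.2, hx'.1]⟩)
    rw [Finset.card_le_one]
    intro i hi j hj
    rw [Finset.mem_filter] at hi hj
    rcases lt_trichotomy i j with h | h | h
    · exact (key i j h hi.2 hj.2).elim
    · exact h
    · exact (key j i h hj.2 hi.2).elim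

lemma aux_main {D : ℝ} (hD : 0 < D) {N : ℕ} (hN : 0 < N)
    (p : ℝ → ℝ) (hp_cont : ContinuousOn p (Set.Icc 0 D))
    (hp_val : Set.MapsTo p (Set.Icc 0 D) (Set.Icc 0 1))
    (N_C : ℕ)
    (hNC : ∀ t ∈ Set.Ioc (0:ℝ) 1, {s ∈ Set.Icc 0 D | p s = t}.encard ≤ N_C)
    (U : Set ℝ) (hU : U ⊆ Icc 0 D) (m : ℕ) (I : Fin m → Set ℝ)
    (hI : ∀ i, (I i).OrdConnected) (hUI : U = ⋃ i, I i)
    (r : ℝ) (hr : 0 ≤ r) :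
    |(volume (U ∩ {s | p s ≤ r})).toReal / D - (((Finset.Icc 1 N).filter
            (fun j : ℕ => (j : ℝ) * D / N ∈ U ∧ p ((j : ℝ) * D / N) ≤ r)).card : ℝ) / N|
      ≤ ((2 * N_C + m * 2 : ℕ) : ℝ) / N := by
  set Bp := (Finset.Icc 1 N).filter (fun j : ℕ =>
      ∃ x ∈ Icc (((j : ℝ) - 1) * D / N) ((j : ℝ) * D / N),
      ∃ y ∈ Icc (((j : ℝ) - 1) * D / N) ((j : ℝ) * D / N), p x ≤ r ∧ r < p y) with hBp
  set BI : Fin m → Finset ℕ := fun i => (Finset.Icc 1 N).filter (fun j : ℕ =>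
      ∃ x ∈ Icc (((j : ℝ) - 1) * D / N) ((j : ℝ) * D / N),
      ∃ y ∈ Icc (((j : ℝ) - 1) * D / N) ((j : ℝ) * D / N), x ∈ I i ∧ y ∉ I i) with hBI
  have hcard : (Bp ∪ Finset.univ.biUnion BI).card ≤ 2 * N_C + m * 2 := by
    refine (Finset.card_union_le _ _).trans (add_le_add ?_ ?_)
    · exact aux_p hD hN p hp_cont hp_val N_C hNC r hr
    · have := Finset.card_biUnion_le_card_mul Finset.univ BI 2
        (fun i _ => aux_I hD hN (I i) (hI i))
      simpa using this
  have hb := aux_bound hD hN (U ∩ {s | p s ≤ r}) (inter_subset_left.trans hU)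
    (Bp ∪ Finset.univ.biUnion BI) ?_
  · refine le_trans (le_of_eq ?_) (hb.trans (by gcongr))
    congr!
  · intro j hj hjB x hx
    rw [Finset.mem_union, not_or] at hjB
    obtain ⟨h1, h2⟩ := hjB
    have hxc := Ioc_subset_Icc_self hx
    have hyc : (j : ℝ) * D / N ∈ Icc (((j : ℝ) - 1) * D / N) ((j : ℝ) * D / N) :=
      ⟨(hx.1.trans_le hx.2).le, le_rfl⟩
    have hpp : p x ≤ r ↔ p ((j : ℝ) * D / N) ≤ r := by
      constructor
      · intro h; by_contra h'
        exact h1 (Finset.mem_filter.2 ⟨hj, x, hxc, _, hyc, h, not_le.1 h'⟩)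
      · intro h; by_contra h'
        exact h1 (Finset.mem_filter.2 ⟨hj, _, hyc, x, hxc, h, not_le.1 h'⟩)
    have hii : ∀ i, (x ∈ I i ↔ (j : ℝ) * D / N ∈ I i) := by
      intro i
      have h3 : j ∉ BI i := fun h => h2 (Finset.mem_biUnion.2 ⟨i, Finset.mem_univ _, h⟩)
      constructor
      · intro h; by_contra h'
        exact h3 (Finset.mem_filter.2 ⟨hj, x, hxc, _, hyc, h, h'⟩)
      · intro h; by_contra h'
        exact h3 (Finset.mem_filter.2 ⟨hj, _, hyc, x, hxc, h, h'⟩)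
    simp only [mem_inter_iff, mem_ofPred_eq, hUI, mem_iUnion, hii, hpp]

/-- for a continuous p-value function `p : [0,D] → [0,1]` whose level sets at
levels `t ∈ (0,1]` have at most `N_C` points, the empirical cumulated p-value functions along
the nested equispaced grids `S_k = {jD/n_k : j = 1,…,n_k}` converge uniformly on `[0,1]` to
`r ↦ μ{s ∈ [0,D] : p s ≤ r}/D`; moreover, if `U ⊆ [0,D]` is a finite union of disjoint
intervals, the corresponding `U`-restricted empirical functions converge uniformly to
`r ↦ μ(U ∩ {s : p s ≤ r})/D`. -/
theorem oneD_sufficient_criteria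
    (D : ℝ) (hD : 0 < D)
    (p : ℝ → ℝ) (hp_cont : ContinuousOn p (Set.Icc 0 D))
    (hp_val : Set.MapsTo p (Set.Icc 0 D) (Set.Icc 0 1))
    (N_C : ℕ)
    (hNC : ∀ t ∈ Set.Ioc (0:ℝ) 1, {s ∈ Set.Icc 0 D | p s = t}.encard ≤ N_C)
    (n : ℕ → ℕ) (hn_pos : ∀ k, 0 < n k) (hn_div : ∀ k, n k ∣ n (k + 1))
    (hn_tendsto : Tendsto n atTop atTop) :
    TendstoUniformlyOn
      (fun k r => (((Finset.Icc 1 (n k)).filter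
          (fun j => p ((j : ℝ) * D / n k) ≤ r)).card : ℝ) / n k)
      (fun r => (volume {s ∈ Set.Icc 0 D | p s ≤ r}).toReal / D)
      atTop (Set.Icc 0 1) ∧
    ∀ U : Set ℝ, U ⊆ Set.Icc 0 D →
      (∃ (m : ℕ) (I : Fin m → Set ℝ), (∀ i, (I i).OrdConnected) ∧
        Pairwise (Function.onFun Disjoint I) ∧ U = ⋃ i, I i) →
      TendstoUniformlyOn
        (fun k r => (((Finset.Icc 1 (n k)).filter
            (fun j => (j : ℝ) * D / n k ∈ U ∧ p ((j : ℝ) * D / n k) ≤ r)).card : ℝ) / n k)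
        (fun r => (volume (U ∩ {s | p s ≤ r})).toReal / D)
        atTop (Set.Icc 0 1) := by
  have main : ∀ U : Set ℝ, U ⊆ Set.Icc 0 D →
      (∃ (m : ℕ) (I : Fin m → Set ℝ), (∀ i, (I i).OrdConnected) ∧
        Pairwise (Function.onFun Disjoint I) ∧ U = ⋃ i, I i) →
      TendstoUniformlyOn
        (fun k r => (((Finset.Icc 1 (n k)).filter
            (fun j => (j : ℝ) * D / n k ∈ U ∧ p ((j : ℝ) * D / n k) ≤ r)).card : ℝ) / n k)
        (fun r => (volume (U ∩ {s | p s ≤ r})).toReal / D)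
        atTop (Set.Icc 0 1) := by
    rintro U hU ⟨m, I, hI, -, hUI⟩
    rw [Metric.tendstoUniformlyOn_iff]
    intro ε hε
    have hlim : Tendsto (fun k => ((2 * N_C + m * 2 : ℕ) : ℝ) / (n k : ℝ)) atTop (nhds 0) :=
      (tendsto_const_div_atTop_nhds_zero_nat _).comp hn_tendsto
    filter_upwards [hlim.eventually (gt_mem_nhds hε)] with k hk r hr
    rw [Real.dist_eq]
    rw [aux_card (n k) (fun x => x * D / n k ∈ U ∧ p (x * D / n k) ≤ r)]
    exact (aux_main hD (hn_pos k) p hp_cont hp_val N_C hNC U hU m I hI hUI r hr.1).trans_lt hk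
  refine ⟨?_, main⟩
  have h := main (Set.Icc 0 D) subset_rfl ⟨1, fun _ => Set.Icc 0 D, fun _ => ordConnected_Icc,
    fun i j hij => (hij (Subsingleton.elim i j)).elim, (Set.iUnion_const _).symm⟩
  refine h.congr (Filter.Eventually.of_forall fun k r _ => ?_)
  have hf : (Finset.Icc 1 (n k)).filter
      (fun j : ℕ => (j : ℝ) * D / n k ∈ Set.Icc 0 D ∧ p ((j : ℝ) * D / n k) ≤ r) =
      (Finset.Icc 1 (n k)).filter (fun j : ℕ => p ((j : ℝ) * D / n k) ≤ r) := by
    refine Finset.filter_congr fun j hj => ?_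
    refine ⟨fun h => h.2, fun h => ⟨aux_sub hD (hn_pos k) hj ⟨?_, le_rfl⟩, h⟩⟩
    gcongr
    linarith
  have e1 := aux_card (n k) (fun x => x * D / n k ∈ Set.Icc 0 D ∧ p (x * D / n k) ≤ r)
  have e2 := aux_card (n k) (fun x => p (x * D / n k) ≤ r)
  have hc := e1.trans (Eq.trans (by convert congrArg Finset.card hf) e2.symm)
  have hc' := congrArg (fun F : ℕ => (F : ℝ) / n k) hc
  convert hc' using 1
  beta_reduce
  congr!
end

section
/- Hypothesis i is rejected by the Benjamini–Hochberg procedure at level α if and only if p̃_i ≤ α. -/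
open scoped Classical

/-- hypothesis `i` is rejected by the Benjamini–Hochberg procedure at level `α`
iff the BH-adjusted p-value `p̃_i` is at most `α`.

BH rejects `i` iff `p_i ≤ (k/m)·α` where `k = max {j : p_(j) ≤ (j/m)·α}`; we use the equivalent
characterization `p_(j) ≤ c ↔ #{l : p_l ≤ c} ≥ j`, so `k = sup {j ≤ m : j ≤ #{l : p_l ≤ (j/m)·α}}`
(a set containing `0`).  The adjusted p-value is
`p̃_i = min {min (1, m·s/#{l : p_l ≤ s}) : s ∈ {p_1,…,p_m}, s ≥ p_i}`. -/
theorem BH_adjusted_pvalues_iff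
    (m : ℕ) (hm : 1 ≤ m) (α : ℝ) (hα : α ∈ Set.Ioo (0:ℝ) 1)
    (p : Fin m → ℝ) (hp_val : ∀ i, p i ∈ Set.Icc (0:ℝ) 1)
    (k : ℕ)
    (hk : k = sSup {j | j ≤ m ∧
      j ≤ (Finset.univ.filter (fun l => p l ≤ ((j : ℝ) / m) * α)).card})
    (padj : Fin m → ℝ)
    (hpadj : ∀ i, padj i =
      (Finset.univ.filter (fun l => p i ≤ p l)).inf'
        (by
          refine ⟨i, ?_⟩
          simp)
        (fun l => min 1 ((m : ℝ) * p l /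
          (Finset.univ.filter (fun l' => p l' ≤ p l)).card))) :
    ∀ i, (p i ≤ ((k : ℝ) / m) * α ↔ padj i ≤ α) := by
  have hm0 : (0:ℝ) < m := by exact_mod_cast hm
  obtain ⟨hα0, hα1⟩ := hα
  have hbdd : BddAbove {j | j ≤ m ∧
      j ≤ (Finset.univ.filter (fun l => p l ≤ ((j : ℝ) / m) * α)).card} :=
    ⟨m, fun j hj => hj.1⟩
  have hkmem := Nat.sSup_mem (s := {j | j ≤ m ∧
      j ≤ (Finset.univ.filter (fun l => p l ≤ ((j : ℝ) / m) * α)).card})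
      ⟨0, Nat.zero_le _, Nat.zero_le _⟩ hbdd
  rw [← hk] at hkmem
  obtain ⟨-, hk2⟩ := hkmem
  intro i
  rw [hpadj i]
  refine Iff.trans ?_ (Finset.inf'_le_iff _).symm
  constructor
  · intro hi
    obtain ⟨l, hl, hmax⟩ := Finset.exists_max_image
      (Finset.univ.filter (fun l => p l ≤ ((k : ℝ) / m) * α)) p ⟨i, by simpa using hi⟩
    have hl' : p l ≤ ((k : ℝ) / m) * α := by simpa using hl
    refine ⟨l, by simpa using hmax i (by simpa using hi), ?_⟩
    have hsub : (Finset.univ.filter (fun l => p l ≤ ((k : ℝ) / m) * α)) ⊆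
        Finset.univ.filter (fun l' => p l' ≤ p l) := by
      intro x hx
      simpa using hmax x hx
    have hc := hk2.trans (Finset.card_le_card hsub)
    have hcpos : 0 < (Finset.univ.filter (fun l' => p l' ≤ p l)).card :=
      Finset.card_pos.2 ⟨l, by simp⟩
    have hcR : (k:ℝ) ≤ ((Finset.univ.filter (fun l' => p l' ≤ p l)).card : ℝ) := by
      exact_mod_cast hc
    refine (min_le_right _ _).trans ?_
    rw [div_le_iff₀ (by exact_mod_cast hcpos)]
    rw [div_mul_eq_mul_div, le_div_iff₀ hm0] at hl'
    nlinarith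
  · rintro ⟨l, hl, hle⟩
    have hl' : p i ≤ p l := by simpa using hl
    have hcpos : 0 < (Finset.univ.filter (fun l' => p l' ≤ p l)).card :=
      Finset.card_pos.2 ⟨l, by simp⟩
    have hle' := (min_le_iff.1 hle).resolve_left (not_le.2 hα1)
    rw [div_le_iff₀ (by exact_mod_cast hcpos)] at hle'
    generalize hc : (Finset.univ.filter (fun l' => p l' ≤ p l)).card = c at *
    have hpl : p l ≤ ((c : ℝ) / m) * α := by
      rw [div_mul_eq_mul_div, le_div_iff₀ hm0]
      linarith
    have hck : c ≤ k := by
      rw [hk]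
      refine le_csSup hbdd ⟨?_, ?_⟩
      · rw [← hc]
        exact (Finset.card_le_univ _).trans (by simp)
      · conv_lhs => rw [← hc]
        apply Finset.card_le_card
        intro x hx
        have hx' : p x ≤ p l := by simpa using hx
        simpa using hx'.trans hpl
    have hckR : (c:ℝ) ≤ k := by exact_mod_cast hck
    calc p i ≤ ((c : ℝ) / m) * α := hl'.trans hpl
      _ ≤ ((k : ℝ) / m) * α := by gcongr
end
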